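/- Let Γ be a non-elementary hyperbolic group and μ a symmetric probability measure on Γ with a finite exponential moment, i.e. E[exp(λ d_w(e,Z₁))] < ∞ for some λ > 0 and a word metric d_w. Then there exist positive constants C₁ and c₁ such that G(e,γ) ≤ C₁ e^{−c₁ d_w(e,γ)} for all γ ∈ Γ. -/

import Mathlib

open Filter MeasureTheory Topology Metric Set
open scoped ENNReal

noncomputable section

namespace GHM

/-! ### Coarse geometry of distance functions -/

/-- The Gromov product `(x|y)_w` of `x` and `y` seen from `w`, for a distance function `d`. -/
def gromov {X : Type*} (d : X → X → ℝ) (w x y : X) : ℝ :=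
  (d x w + d y w - d x y) / 2

/-- `d` is `δ`-hyperbolic (four point condition on Gromov products). -/
def IsHyperbolicWith {X : Type*} (d : X → X → ℝ) (δ : ℝ) : Prop :=
  ∀ w x y z : X, min (gromov d w x y) (gromov d w x z) - δ ≤ gromov d w y z

/-- `d` is Gromov hyperbolic. -/
def IsHyperbolic {X : Type*} (d : X → X → ℝ) : Prop :=
  ∃ δ : ℝ, 0 ≤ δ ∧ IsHyperbolicWith d δ

/-- `d` is a genuine metric. -/
structure IsMetricFun {X : Type*} (d : X → X → ℝ) : Prop where
  refl : ∀ x, d x x = 0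
  pos : ∀ x y, x ≠ y → 0 < d x y
  symm : ∀ x y, d x y = d y x
  triangle : ∀ x y z, d x z ≤ d x y + d y z

/-- `f` is a `(Λ,c)`-quasi-isometric embedding from `(X,dX)` to `(Y,dY)`. -/
def QIEmbed {X Y : Type*} (dX : X → X → ℝ) (dY : Y → Y → ℝ)
    (f : X → Y) (Λ c : ℝ) : Prop :=
  ∀ x x' : X, dX x x' / Λ - c ≤ dY (f x) (f x') ∧ dY (f x) (f x') ≤ Λ * dX x x' + c

/-- `(X,dX)` and `(Y,dY)` are quasi-isometric. -/
def QuasiIsometric {X Y : Type*} (dX : X → X → ℝ) (dY : Y → Y → ℝ) : Prop :=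
  ∃ (f : X → Y) (Λ c C : ℝ), 1 ≤ Λ ∧ 0 ≤ c ∧ 0 ≤ C ∧
    QIEmbed dX dY f Λ c ∧ ∀ y : Y, ∃ x : X, dY (f x) y ≤ C

variable {G : Type*} [Group G]

/-- Word length of `g` with respect to the (symmetrized) finite set `S`. -/
def wordLength (S : Finset G) (g : G) : ℕ :=
  sInf {n : ℕ | ∃ l : List G, l.length = n ∧ (∀ a ∈ l, a ∈ S ∨ a⁻¹ ∈ S) ∧ l.prod = g}

/-- The word metric associated with a finite generating set `S`. -/
def wordDist (S : Finset G) (x y : G) : ℝ := wordLength S (x⁻¹ * y)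

/-- `S` generates the group. -/
def Generates (S : Finset G) : Prop := Subgroup.closure (S : Set G) = ⊤

/-- The standard metric on `ℤ`. -/
def intDist (m n : ℤ) : ℝ := |(m : ℝ) - (n : ℝ)|

/-- `G` is a non-elementary hyperbolic group: finitely generated, its word metrics are
Gromov hyperbolic, it is infinite, and it is not quasi-isometric to `ℤ`. -/
def NonElemHyperbolic (G : Type*) [Group G] : Prop :=
  Infinite G ∧ (∃ S : Finset G, Generates S) ∧
    ∀ S : Finset G, Generates S →
      IsHyperbolic (wordDist S) ∧ ¬ QuasiIsometric (wordDist S) intDist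

/-- `d` is invariant under left translations. -/
def LeftInvariant (d : G → G → ℝ) : Prop := ∀ g x y : G, d (g * x) (g * y) = d x y

/-- `d` belongs to the class `𝒟(Γ)`: it is a left-invariant Gromov hyperbolic metric on the
group, quasi-isometric to a word metric of a finite generating set. -/
def MemD (d : G → G → ℝ) : Prop :=
  IsMetricFun d ∧ LeftInvariant d ∧ IsHyperbolic d ∧
    ∃ S : Finset G, Generates S ∧ QuasiIsometric d (wordDist S)

/-! ### Random walks -/

/-- `μ` is (the density of) a probability measure on the (countable) group. -/
def IsProbDensity (μ : G → ℝ) : Prop := (∀ g, 0 ≤ μ g) ∧ HasSum μ 1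

/-- `μ` is symmetric. -/
def IsSymmetric (μ : G → ℝ) : Prop := ∀ g : G, μ g⁻¹ = μ g

/-- The support of `μ` generates `G`. -/
def GeneratesSupp (μ : G → ℝ) : Prop := Subgroup.closure {g : G | μ g ≠ 0} = ⊤

open scoped Classical in
/-- Convolution powers `μ^n` of `μ`. -/
def convPow (μ : G → ℝ) : ℕ → G → ℝ
  | 0 => fun g => if g = 1 then 1 else 0
  | n + 1 => fun g => ∑' y : G, convPow μ n y * μ (y⁻¹ * g)

/-- The Green function `G(x,y) = ∑_n μ^n(x⁻¹y)`. -/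
def greenFn (μ : G → ℝ) (x y : G) : ℝ := ∑' n : ℕ, convPow μ n (x⁻¹ * y)

/-- The random walk is transient, i.e. `G(e,e) = ∑_n μ^n(e) < ∞`. -/
def Transient (μ : G → ℝ) : Prop := Summable fun n : ℕ => convPow μ n (1 : G)

/-- Successive positions of a walk started at `x` with increments `l`. -/
def walkPositions (x : G) (l : List G) : List G := l.scanl (fun p a => p * a) x

/-- The increments `l` describe a trajectory from `x` which hits `y` for the first time at
its final position. -/
def IsFirstHitPath (x y : G) (l : List G) : Prop :=
  (walkPositions x l).getLast? = some y ∧ y ∉ (walkPositions x l).dropLast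

/-- `F(x,y)`: the probability that the `μ`-random walk started at `x` ever hits `y`. -/
def hitProb (μ : G → ℝ) (x y : G) : ℝ :=
  ∑' l : {l : List G // IsFirstHitPath x y l}, ((l : List G).map μ).prod

/-- The Green metric `d_G(x,y) = - log F(x,y)`. -/
def greenDist (μ : G → ℝ) (x y : G) : ℝ := - Real.log (hitProb μ x y)

/-- `μ` has a finite first moment with respect to `d`. -/
def FiniteFirstMoment (d : G → G → ℝ) (μ : G → ℝ) : Prop :=
  Summable fun g : G => d 1 g * μ g

/-- `μ` has an exponential moment with respect to `d`. -/
def HasExpMoment (d : G → G → ℝ) (μ : G → ℝ) : Prop :=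
  ∃ lam : ℝ, 0 < lam ∧ Summable fun g : G => Real.exp (lam * d 1 g) * μ g

/-- The entropy `H(μ^n) = -∑_γ μ^n(γ) log μ^n(γ)` of the `n`-th convolution power. -/
def entropyAt (μ : G → ℝ) (n : ℕ) : ℝ :=
  - ∑' g : G, convPow μ n g * Real.log (convPow μ n g)

/-- `h` is the asymptotic entropy of the walk. -/
def HasEntropy (μ : G → ℝ) (h : ℝ) : Prop :=
  Tendsto (fun n : ℕ => entropyAt μ n / n) atTop (𝓝 h)

/-- `v` is the logarithmic volume growth of `(G,d)` (seen from the identity). -/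
def HasGrowth (d : G → G → ℝ) (v : ℝ) : Prop :=
  Filter.limsup (fun R : ℝ => Real.log (Nat.card {g : G // d 1 g ≤ R}) / R) atTop = v

/-- The position `Z_n = ω_0 ω_1 ⋯ ω_{n-1}` of the random walk at time `n`, given the
sequence of increments `ω`. -/
def walkPos (n : ℕ) (ω : ℕ → G) : G := ((List.range n).map ω).prod

/-- `P` is the law on the space of increment sequences of an i.i.d. sequence of law `μ`:
cylinders have product measure.  (This characterizes the path measure of the random walk.) -/
def IsWalkMeasure [MeasurableSpace G] (μ : G → ℝ) (P : Measure (ℕ → G)) : Prop :=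
  IsProbabilityMeasure P ∧
    ∀ (n : ℕ) (g : Fin n → G),
      P {ω : ℕ → G | ∀ i : Fin n, ω (i : ℕ) = g i} = ∏ i : Fin n, ENNReal.ofReal (μ (g i))

/-! ### The Gromov boundary, visual metrics, harmonic and quasiconformal measures -/

/-- A sequence tends to infinity if Gromov products (at the base point `1`) go to `∞`. -/
def TendstoInfinity (d : G → G → ℝ) (u : ℕ → G) : Prop :=
  Tendsto (fun p : ℕ × ℕ => gromov d 1 (u p.1) (u p.2)) atTop atTop

/-- A realization of the Gromov boundary of `(G,d)` as an abstract type `B`: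
`conv u b` means that the sequence `u` converges at infinity to the boundary point `b`.
The group acts on its boundary by `smul`. -/
structure BoundaryData (G : Type*) [Group G] (d : G → G → ℝ) (B : Type*) where
  conv : (ℕ → G) → B → Prop
  smul : G → B → B
  conv_unique : ∀ u b b', conv u b → conv u b' → b = b'
  exists_conv : ∀ u, TendstoInfinity d u → ∃ b, conv u b
  conv_tendstoInfinity : ∀ u b, conv u b → TendstoInfinity d u
  conv_iff : ∀ u v b, conv u b →
    (conv v b ↔ Tendsto (fun n => gromov d 1 (u n) (v n)) atTop atTop)
  conv_surj : ∀ b, ∃ u, conv u b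
  smul_conv : ∀ (γ : G) (u) (b), conv u b → conv (fun n => γ * u n) (smul γ b)

/-- Asymptotic Gromov product of two sequences. -/
def seqGromov (d : G → G → ℝ) (u v : ℕ → G) : ℝ :=
  Filter.liminf (fun n => gromov d 1 (u n) (v n)) atTop

/-- The metric of `B` is a visual metric of parameter `ε` (with comparison constant `C`)
for the hyperbolic distance `d` on the group:  `dist(a,b) ≍ exp(-ε (a|b))`. -/
def IsVisualMetric {B : Type*} [MetricSpace B] (d : G → G → ℝ)
    (bd : BoundaryData G d B) (ε C : ℝ) : Prop :=
  0 < ε ∧ 0 < C ∧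
    ∀ u v b b', bd.conv u b → bd.conv v b' → b ≠ b' →
      dist b b' ≤ C * Real.exp (-ε * seqGromov d u v) ∧
      Real.exp (-ε * seqGromov d u v) ≤ C * dist b b'

/-- `ν` is the harmonic measure of the random walk of law `μ` on the boundary `B`:
it is the law of the almost sure limit `Z_∞` of the walk on the boundary. -/
def IsHarmonicMeasure {B : Type*} [MeasurableSpace G] [MeasurableSpace B]
    (d : G → G → ℝ) (bd : BoundaryData G d B) (μ : G → ℝ)
    (P : Measure (ℕ → G)) (ν : Measure B) : Prop :=
  IsWalkMeasure μ P ∧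
    ∃ Zinf : (ℕ → G) → B, Measurable Zinf ∧
      (∀ᵐ ω ∂P, bd.conv (fun n => walkPos n ω) (Zinf ω)) ∧ ν = P.map Zinf

/-- Busemann function `β_b(x,y)` of the boundary point `b`. -/
def busemann {B : Type*} (d : G → G → ℝ) (bd : BoundaryData G d B)
    (x y : G) (b : B) : ℝ :=
  sSup {t : ℝ | ∃ u, bd.conv u b ∧
    t = Filter.limsup (fun n => d x (u n) - d y (u n)) atTop}

/-- The image measure `γ^*ρ`, `γ^*ρ(A) = ρ(γA)`. -/
def actPush {B : Type*} [MeasurableSpace B] {d : G → G → ℝ}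
    (bd : BoundaryData G d B) (γ : G) (ρ : Measure B) : Measure B :=
  ρ.map (bd.smul γ⁻¹)

/-- `ρ` is a quasiconformal measure on the boundary for `(G,d)` of logarithmic growth
parameter `v`: `γ^*ρ` and `ρ` are mutually absolutely continuous, with density
`dγ^*ρ/dρ ≍ exp (v β_b(1,γ⁻¹))` (uniformly in `γ`). -/
def IsQuasiconformalMeasure {B : Type*} [MeasurableSpace B] {d : G → G → ℝ}
    (bd : BoundaryData G d B) (ρ : Measure B) (v : ℝ) : Prop :=
  ∃ C : ℝ, 0 < C ∧ ∀ γ : G,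
    actPush bd γ ρ ≪ ρ ∧ ρ ≪ actPush bd γ ρ ∧
      ∀ᵐ b ∂ρ,
        (actPush bd γ ρ).rnDeriv ρ b
            ≤ ENNReal.ofReal (C * Real.exp (v * busemann d bd 1 γ⁻¹ b)) ∧
        ENNReal.ofReal (C⁻¹ * Real.exp (v * busemann d bd 1 γ⁻¹ b))
            ≤ (actPush bd γ ρ).rnDeriv ρ b

/-- `ν` is Ahlfors regular of dimension `α`: `ν(B(b,r)) ≍ r^α`. -/
def AhlforsRegularOfDim {B : Type*} [MetricSpace B] [MeasurableSpace B]
    (ν : Measure B) (α : ℝ) : Prop :=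
  ∃ C : ℝ, 0 < C ∧ ∀ (b : B) (r : ℝ), 0 < r → r ≤ Metric.diam (Set.univ : Set B) →
    ENNReal.ofReal (C⁻¹ * r ^ α) ≤ ν (Metric.ball b r) ∧
      ν (Metric.ball b r) ≤ ENNReal.ofReal (C * r ^ α)

/-- The Hausdorff dimension of a measure: the infimum of the Hausdorff dimensions of sets of
full measure. -/
def measureDim {B : Type*} [EMetricSpace B] [MeasurableSpace B] (ν : Measure B) : ℝ≥0∞ :=
  ⨅ (A : Set B) (_ : ν Aᶜ = 0), dimH A

/-! ### Word geodesics -/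

/-- `p 0, …, p n` is a geodesic segment for the word metric of `S`. -/
def IsWordGeodesic (S : Finset G) (n : ℕ) (p : ℕ → G) : Prop :=
  ∀ i j : ℕ, i ≤ n → j ≤ n → wordDist S (p i) (p j) = |(i : ℝ) - (j : ℝ)|

/-- `v` lies within distance `r` of some word geodesic segment from `x` to `y`. -/
def NearWordGeodesic (S : Finset G) (x y v : G) (r : ℝ) : Prop :=
  ∃ (n : ℕ) (p : ℕ → G), IsWordGeodesic S n p ∧ p 0 = x ∧ p n = y ∧
    ∃ i ≤ n, wordDist S v (p i) ≤ r

/-! ### Martin boundary -/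

/-- The Martin kernel `K(x,y) = G(x,y)/G(e,y)`. -/
def martinKernel (μ : G → ℝ) (x y : G) : ℝ := greenFn μ x y / greenFn μ 1 y

/-- The embedding `y ↦ K(·,y)` of the group in `C(G)` (pointwise topology). -/
def martinMap (μ : G → ℝ) (y : G) : G → ℝ := fun x => martinKernel μ x y

/-- The Martin boundary: the boundary of the image of the group under the Martin embedding
in the space of functions with the topology of pointwise convergence. -/
def martinBoundary (μ : G → ℝ) : Set (G → ℝ) :=
  closure (Set.range (martinMap μ)) \ Set.range (martinMap μ)

/-- `h` is a `μ`-harmonic function. -/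
def IsHarmonicFn (μ : G → ℝ) (h : G → ℝ) : Prop :=
  ∀ x : G, h x = ∑' y : G, h y * μ (x⁻¹ * y)

/-- `h` is a minimal positive harmonic function. -/
def IsMinimalHarmonic (μ : G → ℝ) (h : G → ℝ) : Prop :=
  IsHarmonicFn μ h ∧ (∀ x, 0 < h x) ∧
    ∀ u : G → ℝ, IsHarmonicFn μ u → (∀ x, 0 ≤ u x) → (∀ x, u x ≤ h x) →
      ∃ c : ℝ, u = fun x => c * h x

/-! ### Metric space versions (geodesic and quasiruled spaces) -/

/-- A geodesic metric space. -/
def IsGeodesicSpace (X : Type*) [MetricSpace X] : Prop :=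
  ∀ x y : X, ∃ f : ℝ → X, f 0 = x ∧ f (dist x y) = y ∧
    ∀ s ∈ Set.Icc (0:ℝ) (dist x y), ∀ t ∈ Set.Icc (0:ℝ) (dist x y),
      dist (f s) (f t) = |s - t|

/-- `f : [a,b] → Y` is a `(Λ,c)`-quasigeodesic segment. -/
def IsQuasigeodesicOn {Y : Type*} [MetricSpace Y] (f : ℝ → Y) (a b Λ c : ℝ) : Prop :=
  ∀ s ∈ Set.Icc a b, ∀ t ∈ Set.Icc a b,
    |s - t| / Λ - c ≤ dist (f s) (f t) ∧ dist (f s) (f t) ≤ Λ * |s - t| + c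

/-- `f : [a,b] → Y` is a `τ`-quasiruler: Gromov products of triples along it are `≤ τ`. -/
def IsQuasirulerOn {Y : Type*} [MetricSpace Y] (f : ℝ → Y) (a b τ : ℝ) : Prop :=
  ∀ s t u : ℝ, s ∈ Set.Icc a b → t ∈ Set.Icc a b → u ∈ Set.Icc a b → s ≤ t → t ≤ u →
    dist (f s) (f t) + dist (f t) (f u) ≤ dist (f s) (f u) + 2 * τ

/-- A quasiruled metric space: for some constants `(Λ,c,τ)` every pair of points is joined
by a `(Λ,c)`-quasigeodesic, and every `(Λ,c)`-quasigeodesic is a `τ`-quasiruler. -/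
def Quasiruled (Y : Type*) [MetricSpace Y] : Prop :=
  ∃ Λ c τ : ℝ, 1 ≤ Λ ∧ 0 ≤ c ∧ 0 ≤ τ ∧
    (∀ x y : Y, ∃ (a b : ℝ) (f : ℝ → Y), a ≤ b ∧ f a = x ∧ f b = y ∧
      IsQuasigeodesicOn f a b Λ c) ∧
    ∀ (f : ℝ → Y) (a b : ℝ), IsQuasigeodesicOn f a b Λ c → IsQuasirulerOn f a b τ

/-- A metric space is hyperbolic. -/
def HypSpace (Y : Type*) [MetricSpace Y] : Prop :=
  IsHyperbolic (fun x y : Y => dist x y)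

/-- `f` is a quasi-isometry between metric spaces. -/
def MetricQI {X Y : Type*} [MetricSpace X] [MetricSpace Y] (f : X → Y) : Prop :=
  ∃ Λ c C : ℝ, 1 ≤ Λ ∧ 0 ≤ c ∧ 0 ≤ C ∧
    QIEmbed (fun a b : X => dist a b) (fun a b : Y => dist a b) f Λ c ∧
    ∀ y : Y, ∃ x : X, dist (f x) y ≤ C

/-!
The walk has a spectral gap because right translation by a large ball moves points away from the
identity. A group whose word metric is hyperbolic but not quasi-isometric to `ℤ` has a point far
from a bi-infinite geodesic, hence three directions at bounded distance from the identity with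
pairwise bounded Gromov products. Any element can be prolonged in two of these directions, so balls
grow exponentially. As few points of a ball have a large Gromov product with a given point, the
word length then increases on average by at least one under translation by a large ball `B`, and
`exp (-ε |x|)` is a strict supersolution for the average over `B`.

Schur's test with this weight gives a Poincaré inequality for `B`, which passes to any `μ` whose
support generates the group. For symmetric `μ` it makes `‖μⁿ‖₂`, and so `μⁿ(γ)`, decay
exponentially in `n`. The exponential moment gives `μⁿ(γ) ≤ Mⁿ exp (-λ |γ|)`, and interpolating
between the two bounds gives a geometric series with sum at most `C₁ exp (-c₁ |γ|)`.
-/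

open scoped NNReal

/-! ### Word metrics -/

section WordMetric

variable {S : Finset G}

lemma exists_word (hS : Generates S) (g : G) :
    ∃ l : List G, l.length = wordLength S g ∧ (∀ a ∈ l, a ∈ S ∨ a⁻¹ ∈ S) ∧ l.prod = g := by
  have hg : g ∈ (Subgroup.closure (S : Set G)).toSubmonoid := hS ▸ Subgroup.mem_top g
  rw [Subgroup.closure_toSubmonoid] at hg
  obtain ⟨l, hl, hprod⟩ := Submonoid.exists_list_of_mem_closure hg
  exact Nat.sInf_mem (s := {n | ∃ l : List G, l.length = n ∧ _ ∧ l.prod = g})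
    ⟨l.length, l, rfl, by simpa using hl, hprod⟩

lemma wordLength_prod_le {l : List G} (hl : ∀ a ∈ l, a ∈ S ∨ a⁻¹ ∈ S) :
    wordLength S l.prod ≤ l.length :=
  Nat.sInf_le ⟨l, rfl, hl, rfl⟩

lemma wordLength_one : wordLength S (1 : G) = 0 :=
  Nat.le_zero.1 <| wordLength_prod_le (l := []) (by simp)

lemma wordLength_mul_le (hS : Generates S) (g h : G) :
    wordLength S (g * h) ≤ wordLength S g + wordLength S h := by
  obtain ⟨k, hk, hkS, rfl⟩ := exists_word hS g
  obtain ⟨l, hl, hlS, rfl⟩ := exists_word hS h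
  rw [← hk, ← hl, ← List.length_append, ← List.prod_append]
  exact wordLength_prod_le fun a ha => (List.mem_append.1 ha).elim (hkS a) (hlS a)

lemma wordLength_inv_le (hS : Generates S) (g : G) : wordLength S g⁻¹ ≤ wordLength S g := by
  obtain ⟨l, hl, hlS, rfl⟩ := exists_word hS g
  rw [← hl, List.prod_inv_reverse]
  refine (wordLength_prod_le fun a ha => ?_).trans (by simp)
  obtain ⟨b, hb, rfl⟩ := List.mem_map.1 (List.mem_reverse.1 ha)
  simpa [or_comm] using hlS b hb

lemma wordLength_inv (hS : Generates S) (g : G) : wordLength S g⁻¹ = wordLength S g :=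
  (wordLength_inv_le hS g).antisymm (by simpa using wordLength_inv_le hS g⁻¹)

lemma abs_wordLength_mul_sub_le (hS : Generates S) (g h : G) :
    |(wordLength S (g * h) : ℝ) - wordLength S g| ≤ wordLength S h := by
  have hle : (wordLength S (g * h) : ℝ) ≤ wordLength S g + wordLength S h := by
    exact_mod_cast wordLength_mul_le hS g h
  have hge := wordLength_mul_le hS (g * h) h⁻¹
  rw [mul_inv_cancel_right, wordLength_inv hS] at hge
  have hge' : (wordLength S g : ℝ) ≤ wordLength S (g * h) + wordLength S h := by exact_mod_cast hge
  exact abs_le.2 ⟨by linarith, by linarith⟩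

lemma wordLength_eq_zero (hS : Generates S) {g : G} : wordLength S g = 0 ↔ g = 1 := by
  refine ⟨fun h => ?_, fun h => h ▸ wordLength_one⟩
  obtain ⟨l, hl, -, rfl⟩ := exists_word hS g
  rw [List.eq_nil_of_length_eq_zero (hl.trans h), List.prod_nil]

lemma exists_wordLength_eq (hS : Generates S) {g : G} {i : ℕ} (hi : i ≤ wordLength S g) :
    ∃ a, wordLength S a = i ∧ wordLength S (a⁻¹ * g) = wordLength S g - i := by
  obtain ⟨l, hl, hlS, hprod⟩ := exists_word hS g
  have hg : (l.take i).prod * (l.drop i).prod = g := by rw [List.prod_take_mul_prod_drop, hprod]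
  have htake : wordLength S (l.take i).prod ≤ i :=
    (wordLength_prod_le fun a ha => hlS a (List.mem_of_mem_take ha)).trans (by simp)
  have hdrop : wordLength S (l.drop i).prod ≤ wordLength S g - i :=
    (wordLength_prod_le fun a ha => hlS a (List.mem_of_mem_drop ha)).trans (by simp [hl])
  have hsum := wordLength_mul_le hS (l.take i).prod (l.drop i).prod
  rw [hg] at hsum
  refine ⟨(l.take i).prod, by omega, ?_⟩
  rw [← hg, inv_mul_cancel_left, hg]
  omega

lemma finite_setOf_wordLength_le (hS : Generates S) (n : ℕ) : {g | wordLength S g ≤ n}.Finite := by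
  have : Finite {a : G | a ∈ S ∨ a⁻¹ ∈ S} :=
    (S.finite_toSet.union S.finite_toSet.inv).subset fun a => by simp
  refine ((List.finite_length_le {a : G | a ∈ S ∨ a⁻¹ ∈ S} n).image
    fun l => (l.map (↑)).prod).subset fun g hg => ?_
  obtain ⟨l, hl, hlS, rfl⟩ := exists_word hS g
  lift l to List {a : G | a ∈ S ∨ a⁻¹ ∈ S} using hlS
  exact ⟨l, by simpa using hl.trans_le hg, rfl⟩

/-- The ball of radius `n` about the identity for the word metric of `S`. -/
def wordBall (hS : Generates S) (n : ℕ) : Finset G := (finite_setOf_wordLength_le hS n).toFinset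

lemma mem_wordBall {hS : Generates S} {n : ℕ} {g : G} : g ∈ wordBall hS n ↔ wordLength S g ≤ n := by
  simp [wordBall]

lemma wordBall_mono (hS : Generates S) : Monotone (wordBall hS) := fun _ _ hmn _ hg =>
  mem_wordBall.2 ((mem_wordBall.1 hg).trans hmn)

lemma one_mem_wordBall (hS : Generates S) (n : ℕ) : 1 ∈ wordBall hS n :=
  mem_wordBall.2 (wordLength_one.trans_le n.zero_le)

lemma inv_mem_wordBall {hS : Generates S} {n : ℕ} {g : G} (hg : g ∈ wordBall hS n) :
    g⁻¹ ∈ wordBall hS n :=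
  mem_wordBall.2 ((wordLength_inv hS g).trans_le (mem_wordBall.1 hg))

lemma exists_lt_wordLength [Infinite G] (hS : Generates S) (n : ℕ) : ∃ g, n < wordLength S g := by
  obtain ⟨g, hg⟩ := (wordBall hS n).exists_notMem
  exact ⟨g, not_le.1 (mt mem_wordBall.2 hg)⟩

lemma wordDist_one_left (g : G) : wordDist S 1 g = wordLength S g := by simp [wordDist]

lemma isMetricFun_wordDist (hS : Generates S) : IsMetricFun (wordDist S) where
  refl x := by simp [wordDist, wordLength_one]
  pos x y hxy := by
    rw [wordDist, Nat.cast_pos, pos_iff_ne_zero, Ne, wordLength_eq_zero hS, inv_mul_eq_one]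
    exact hxy
  symm x y := by rw [wordDist, wordDist, ← wordLength_inv hS, mul_inv_rev, inv_inv]
  triangle x y z := by
    have h := wordLength_mul_le hS (x⁻¹ * y) (y⁻¹ * z)
    rw [mul_assoc, mul_inv_cancel_left] at h
    simp only [wordDist]
    exact_mod_cast h

lemma leftInvariant_wordDist (S : Finset G) : LeftInvariant (wordDist S) := fun g x y => by
  simp only [wordDist, mul_inv_rev, mul_assoc, inv_mul_cancel_left]

lemma LeftInvariant.gromov_mul_left {d : G → G → ℝ} (hd : LeftInvariant d) (g w x y : G) :
    gromov d (g * w) (g * x) (g * y) = gromov d w x y := by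
  simp only [gromov, hd g]

end WordMetric

/-! ### Projections and tripods in hyperbolic spaces -/

section Hyperbolic

variable {X : Type*} {d : X → X → ℝ} {δ : ℝ} {w x y z p q a g : X}

/-- `p` lies on a geodesic from `x` to `y`. -/
def IsBetween (d : X → X → ℝ) (x p y : X) : Prop := d x p + d p y = d x y

/-- The discrete substitute for geodesic spaces: two points are joined by points at every
integer distance, as in the vertex set of a graph. -/
def IsIntGeodesic (d : X → X → ℝ) : Prop :=
  ∀ ⦃x y : X⦄ ⦃i : ℕ⦄, (i : ℝ) ≤ d x y → ∃ a, IsBetween d x a y ∧ d x a = i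

lemma isIntGeodesic_wordDist {S : Finset G} (hS : Generates S) :
    IsIntGeodesic (wordDist S) := fun x y i hi => by
  have hi' : i ≤ wordLength S (x⁻¹ * y) := Nat.cast_le.1 hi
  obtain ⟨a, ha, hay⟩ := exists_wordLength_eq hS hi'
  have hxa : wordDist S x (x * a) = i := by rw [wordDist, inv_mul_cancel_left, ha]
  refine ⟨x * a, ?_, hxa⟩
  rw [IsBetween, hxa, wordDist, wordDist, mul_inv_rev, mul_assoc, hay, Nat.cast_sub hi']
  ring

lemma IsMetricFun.nonneg (hd : IsMetricFun d) (x y : X) : 0 ≤ d x y := by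
  linarith [hd.triangle x y x, hd.symm x y, hd.refl x]

lemma IsMetricFun.abs_sub_le (hd : IsMetricFun d) (x y z : X) : |d x z - d y z| ≤ d x y := by
  rw [abs_le]
  constructor <;> linarith [hd.triangle x y z, hd.triangle y x z, hd.symm x y]

lemma gromov_comm (hd : IsMetricFun d) (w x y : X) : gromov d w x y = gromov d w y x := by
  rw [gromov, gromov, hd.symm y x, add_comm (d x w)]

lemma gromov_le_dist (hd : IsMetricFun d) (w x y : X) : gromov d w x y ≤ d w x := by
  rw [gromov]
  linarith [hd.triangle y x w, hd.symm x y, hd.symm x w]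

lemma gromov_add_gromov (hd : IsMetricFun d) (w x y : X) :
    gromov d w x y + gromov d x w y = d w x := by
  rw [gromov, gromov]
  linarith [hd.symm x w, hd.symm w y, hd.symm x y]

lemma IsHyperbolicWith.nonneg (hd : IsMetricFun d) (hδ : IsHyperbolicWith d δ) (x : X) :
    0 ≤ δ := by
  have h := hδ x x x x
  rw [gromov, hd.refl, min_self] at h
  linarith

namespace IsBetween

lemma symm (hd : IsMetricFun d) (h : IsBetween d x p y) : IsBetween d y p x := by
  unfold IsBetween at *
  linarith [hd.symm x p, hd.symm p y, hd.symm x y]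

lemma gromov_left (hd : IsMetricFun d) (h : IsBetween d x p y) : gromov d x y p = d x p := by
  unfold IsBetween at h
  rw [gromov]
  linarith [hd.symm x p, hd.symm p y, hd.symm x y]

lemma gromov_eq_zero (hd : IsMetricFun d) (h : IsBetween d x p y) : gromov d p x y = 0 := by
  unfold IsBetween at h
  rw [gromov]
  linarith [hd.symm p y]

lemma gromov_le_gromov (hd : IsMetricFun d) (h : IsBetween d w a x) (y : X) :
    gromov d w a y ≤ gromov d w x y := by
  unfold IsBetween at h
  rw [gromov, gromov]
  linarith [hd.triangle x a y, hd.symm w a, hd.symm w x, hd.symm x a]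

lemma trans (hd : IsMetricFun d) (hp : IsBetween d x p y) (hq : IsBetween d x q p) :
    IsBetween d x q y := by
  unfold IsBetween at *
  linarith [hd.triangle x q y, hd.triangle q p y]

lemma dist_le (hd : IsMetricFun d) (hδ : IsHyperbolicWith d δ)
    (hp : IsBetween d x p y) (hq : IsBetween d x q y) : d p q ≤ |d x p - d x q| + 2 * δ := by
  have h := hδ x y p q
  rw [hp.gromov_left hd, hq.gromov_left hd, gromov, hd.symm p x, hd.symm q x] at h
  rcases le_total (d x p) (d x q) with hle | hle
  · rw [min_eq_left hle] at h
    rw [abs_of_nonpos (by linarith)]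
    linarith
  · rw [min_eq_right hle] at h
    rw [abs_of_nonneg (by linarith)]
    linarith

end IsBetween

/-- `p` is a nearest-point projection of `g` to the geodesics from `x` to `y`. -/
structure IsProjection (d : X → X → ℝ) (x y g p : X) : Prop where
  isBetween : IsBetween d x p y
  dist_le : ∀ q, IsBetween d x q y → d g p ≤ d g q

namespace IsProjection

lemma symm (hd : IsMetricFun d) (h : IsProjection d x y g p) : IsProjection d y x g p :=
  ⟨h.isBetween.symm hd, fun q hq => h.dist_le q (hq.symm hd)⟩

lemma gromov_le (hd : IsMetricFun d) (hgeod : IsIntGeodesic d) (hδ : IsHyperbolicWith d δ)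
    (h : IsProjection d x y g p) : gromov d p x g ≤ 2 * δ + 1 := by
  by_contra! hlarge
  set t := gromov d p x g
  have hfloor : (⌊t⌋₊ : ℝ) ≤ t := Nat.floor_le (by linarith [hδ.nonneg hd p])
  -- Moving from `p` towards `x` by about `(x|g)_p` would bring us closer to `g`.
  obtain ⟨q, hpq, hq⟩ := hgeod (hfloor.trans (gromov_le_dist hd p x g))
  have hnear := h.dist_le q (h.isBetween.trans hd (hpq.symm hd))
  have hxq : gromov d p x q = ⌊t⌋₊ := (hpq.gromov_left hd).trans hq
  have hgq : gromov d p g q ≤ ⌊t⌋₊ / 2 := by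
    rw [gromov]
    linarith [hd.symm q p]
  have hhyp := hδ p x g q
  rw [hxq, min_eq_right hfloor] at hhyp
  linarith [Nat.lt_floor_add_one t]

lemma le_dist (hd : IsMetricFun d) (h : IsProjection d x y g p) (ha : IsBetween d x a y) {c : ℝ}
    (hc : c + 2 * d g a ≤ d x a) : c ≤ d p x := by
  linarith [h.dist_le a ha, hd.triangle x p a, hd.triangle p g a, hd.symm p g, hd.symm x p]

end IsProjection

/-- Three points at distance at least `D` from `p`, with pairwise Gromov products at `p` at most
`R`. -/
def IsTripod (d : X → X → ℝ) (R D : ℝ) (p : X) (y : Fin 3 → X) : Prop :=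
  (∀ i, D ≤ d p (y i)) ∧ Pairwise fun i j => gromov d p (y i) (y j) ≤ R

lemma IsProjection.isTripod (hd : IsMetricFun d) (hgeod : IsIntGeodesic d)
    (hδ : IsHyperbolicWith d δ) (h : IsProjection d x y g p) {D : ℝ}
    (hx : D ≤ d p x) (hy : D ≤ d p y) (hg : D ≤ d p g) :
    IsTripod d (2 * δ + 1) D p ![x, y, g] := by
  have hxy : gromov d p x y ≤ 2 * δ + 1 := by
    rw [h.isBetween.gromov_eq_zero hd]
    linarith [hδ.nonneg hd p]
  have hxg := h.gromov_le hd hgeod hδ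
  have hyg := (h.symm hd).gromov_le hd hgeod hδ
  refine ⟨by simp [Fin.forall_fin_succ, hx, hy, hg], fun i j hij => ?_⟩
  fin_cases i <;> fin_cases j <;> first
    | exact absurd rfl hij
    | assumption
    | (rw [gromov_comm hd]; assumption)

namespace IsTripod

variable {R : ℝ} {y : Fin 3 → X}

lemma exists_dist_eq (hd : IsMetricFun d) (hgeod : IsIntGeodesic d) {D : ℕ}
    (h : IsTripod d R D p y) : ∃ z, IsTripod d R D p z ∧ ∀ i, d p (z i) = D := by
  choose z hz hzD using fun i => hgeod (h.1 i)
  refine ⟨z, ⟨fun i => (hzD i).ge, fun i j hij => ?_⟩, hzD⟩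
  calc gromov d p (z i) (z j) ≤ gromov d p (y i) (z j) := (hz i).gromov_le_gromov hd _
    _ = gromov d p (z j) (y i) := gromov_comm hd _ _ _
    _ ≤ gromov d p (y j) (y i) := (hz j).gromov_le_gromov hd _
    _ ≤ R := h.2 hij.symm

lemma exists_forall_ne_gromov_le (hδ : IsHyperbolicWith d δ) {D : ℝ} (h : IsTripod d R D p y)
    (w : X) : ∃ k, ∀ i ≠ k, gromov d p w (y i) ≤ R + δ := by
  by_cases hk : ∃ k, R + δ < gromov d p w (y k)
  · obtain ⟨k, hk⟩ := hk
    refine ⟨k, fun i hi => ?_⟩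
    by_contra! hi'
    linarith [hδ p w (y i) (y k), h.2 hi, lt_min hi' hk]
  · exact ⟨0, fun i _ => not_lt.1 fun hi => hk ⟨i, hi⟩⟩

lemma mul_left {d : G → G → ℝ} (hd : LeftInvariant d) {D : ℝ} {p : G} {y : Fin 3 → G}
    (h : IsTripod d R D p y) (a : G) : IsTripod d R D (a * p) fun i => a * y i :=
  ⟨fun i => (h.1 i).trans_eq (hd a p (y i)).symm,
    fun _ _ hij => (hd.gromov_mul_left a p _ _).trans_le (h.2 hij)⟩

end IsTripod

end Hyperbolic

/-! ### Hyperbolic groups without tripods are quasi-isometric to `ℤ` -/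

section QuasiLine

variable {S : Finset G} {δ D : ℝ}

lemma exists_isProjection (hS : Generates S) (x y g : G) :
    ∃ p, IsProjection (wordDist S) x y g p := by
  have hne : {q | IsBetween (wordDist S) x q y}.Nonempty :=
    ⟨x, by rw [Set.mem_ofPred_eq, IsBetween, (isMetricFun_wordDist hS).refl, zero_add]⟩
  exact ⟨Function.argminOn (fun q => wordLength S (g⁻¹ * q)) _ hne,
    Function.argminOn_mem _ _ hne, fun q hq => Nat.cast_le.2 <|
      Function.argminOn_le (fun q => wordLength S (g⁻¹ * q)) _ hq⟩

lemma exists_isBetween_wordDist_eq [Infinite G] (hS : Generates S) (n : ℕ) :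
    ∃ x y, IsBetween (wordDist S) x 1 y ∧ wordDist S x 1 = n ∧ wordDist S 1 y = n := by
  have hgeod := isIntGeodesic_wordDist hS
  have hinv := leftInvariant_wordDist S
  obtain ⟨g, hg⟩ := exists_lt_wordLength hS (2 * n)
  obtain ⟨b, -, hb⟩ := hgeod (x := 1) (y := g) (i := 2 * n)
    (by rw [wordDist_one_left]; exact_mod_cast hg.le)
  obtain ⟨a, hab, ha⟩ := hgeod (x := 1) (y := b) (i := n)
    (by rw [hb]; exact_mod_cast Nat.le_mul_of_pos_left n two_pos)
  have hx : wordDist S a⁻¹ 1 = wordDist S 1 a := by rw [← hinv a, mul_inv_cancel, mul_one]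
  have hy : wordDist S 1 (a⁻¹ * b) = wordDist S a b := by
    rw [← hinv a, mul_one, mul_inv_cancel_left]
  have hxy : wordDist S a⁻¹ (a⁻¹ * b) = wordDist S 1 b := by
    rw [← hinv a, mul_inv_cancel, mul_inv_cancel_left]
  unfold IsBetween at *
  refine ⟨a⁻¹, a⁻¹ * b, by rw [hx, hy, hxy, hab], hx.trans ha, hy.trans ?_⟩
  push_cast at hb
  linarith

lemma exists_horofunction (hS : Generates S) {x : ℕ → G} (hx : ∀ n, wordDist S (x n) 1 = n) :
    ∃ f : G → ℤ, ∀ g, ∀ᶠ n in hyperfilter ℕ, wordDist S g (x n) = n + f g := by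
  have hd := isMetricFun_wordDist hS
  have hmem : ∀ g n, (wordLength S (g⁻¹ * x n) : ℤ) - n ∈
      Set.Icc (-(wordLength S g : ℤ)) (wordLength S g) := by
    intro g n
    have h := hd.abs_sub_le g 1 (x n)
    rw [hd.symm g 1, hd.symm 1 (x n), hx, wordDist_one_left, wordDist] at h
    exact abs_le.1 (by exact_mod_cast h)
  have hlim : ∀ g, ∃ k : ℤ, ∀ᶠ n in hyperfilter ℕ, (wordLength S (g⁻¹ * x n) : ℤ) - n = k := by
    intro g
    have hev : ∀ᶠ n in hyperfilter ℕ, ∃ k ∈ Set.Icc (-(wordLength S g : ℤ)) (wordLength S g),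
        (wordLength S (g⁻¹ * x n) : ℤ) - n = k := Eventually.of_forall fun n => ⟨_, hmem g n, rfl⟩
    obtain ⟨k, -, hk⟩ := (Ultrafilter.eventually_exists_mem_iff (Set.finite_Icc _ _)).1 hev
    exact ⟨k, hk⟩
  choose f hf using hlim
  refine ⟨f, fun g => (hf g).mono fun n hn => ?_⟩
  rw [← hn, wordDist]
  push_cast
  ring

/-- A quasi-line: geodesic segments `[x n, y n]` of length `2 n` centred at `1`, such that every
point of the group is eventually `D`-close to them. -/
structure IsQuasiLine (S : Finset G) (D : ℝ) (x y : ℕ → G) : Prop where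
  isBetween : ∀ n, IsBetween (wordDist S) (x n) 1 (y n)
  dist_left : ∀ n, wordDist S (x n) 1 = n
  dist_right : ∀ n, wordDist S 1 (y n) = n
  exists_near : ∀ g, ∀ᶠ n in atTop, ∃ p, IsBetween (wordDist S) (x n) p (y n) ∧ wordDist S g p ≤ D

lemma exists_isQuasiLine [Infinite G] (hS : Generates S)
    (hδ : IsHyperbolicWith (wordDist S) δ)
    (hno : ¬ ∃ p y, IsTripod (wordDist S) (2 * δ + 1) D p y) :
    ∃ x y, IsQuasiLine S D x y := by
  have hd := isMetricFun_wordDist hS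
  choose x y hxy hx hy using exists_isBetween_wordDist_eq hS
  refine ⟨x, y, hxy, hx, hy, fun g => ?_⟩
  filter_upwards [eventually_ge_atTop ⌈D + 2 * wordDist S g 1⌉₊] with n hn
  have hn' : D + 2 * wordDist S g 1 ≤ n := (Nat.le_ceil _).trans (Nat.cast_le.2 hn)
  obtain ⟨p, hp⟩ := exists_isProjection hS (x n) (y n) g
  refine ⟨p, hp.isBetween, not_lt.1 fun hfar => hno ⟨p, _, hp.isTripod hd
    (isIntGeodesic_wordDist hS) hδ (hp.le_dist hd (hxy n) ?_)
    ((hp.symm hd).le_dist hd ((hxy n).symm hd) ?_) ?_⟩⟩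
  · rwa [hx]
  · rwa [hd.symm (y n), hy]
  · rw [hd.symm]
    exact hfar.le

namespace IsQuasiLine

variable {x y : ℕ → G} {f : G → ℤ}

lemma qiEmbed (hS : Generates S) (hδ : IsHyperbolicWith (wordDist S) δ)
    (h : IsQuasiLine S D x y)
    (hf : ∀ g, ∀ᶠ n in hyperfilter ℕ, wordDist S g (x n) = n + f g) :
    QIEmbed (wordDist S) intDist f 1 (4 * D + 2 * δ) := by
  intro a b
  have hd := isMetricFun_wordDist hS
  obtain ⟨n, ⟨⟨p, hp, hap⟩, q, hq, hbq⟩, ha, hb⟩ :=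
    ((((h.exists_near a).and (h.exists_near b)).filter_mono Nat.hyperfilter_le_atTop).and
      ((hf a).and (hf b))).exists
  have hpq := hp.dist_le hd hδ hq
  have hab : intDist (f a) (f b) = |wordDist S a (x n) - wordDist S b (x n)| := by
    rw [intDist, ha, hb, add_sub_add_left_eq_sub]
  have hclose : |wordDist S (x n) p - wordDist S (x n) q| ≤
      |wordDist S a (x n) - wordDist S b (x n)| + 2 * D := by
    have hpa := abs_le.1 (hd.abs_sub_le a p (x n))
    have hqb := abs_le.1 (hd.abs_sub_le b q (x n))
    have hab := abs_le.1 (le_refl |wordDist S a (x n) - wordDist S b (x n)|)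
    rw [hd.symm (x n) p, hd.symm (x n) q, abs_le]
    constructor <;> linarith
  rw [hab, div_one, one_mul]
  constructor
  · linarith [hd.triangle a p b, hd.triangle p q b, hd.symm q b]
  · linarith [hd.abs_sub_le a b (x n), hd.nonneg a p, hδ.nonneg hd a]

lemma surjective (hS : Generates S) (hδ : IsHyperbolicWith (wordDist S) δ)
    (h : IsQuasiLine S D x y)
    (hf : ∀ g, ∀ᶠ n in hyperfilter ℕ, wordDist S g (x n) = n + f g) : Function.Surjective f := by
  intro k
  have hd := isMetricFun_wordDist hS
  have hev : ∀ᶠ n in hyperfilter ℕ, ∃ p ∈ {g | wordLength S g ≤ ⌊|(k : ℝ)| + 2 * δ⌋₊},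
      wordDist S p (x n) = n + k := by
    filter_upwards [((eventually_ge_atTop k.natAbs).filter_mono Nat.hyperfilter_le_atTop)] with n hn
    have hcast : (((n + k).toNat : ℕ) : ℝ) = n + k := by
      exact_mod_cast Int.toNat_of_nonneg (show 0 ≤ n + k by omega)
    have hkn : (k : ℝ) ≤ n := by exact_mod_cast (show k ≤ n by omega)
    obtain ⟨p, hp, hpk⟩ := isIntGeodesic_wordDist hS (x := x n) (y := y n) (i := (n + k).toNat) (by
      rw [hcast, ← h.isBetween, h.dist_left, h.dist_right]
      linarith)
    have hp1 := (h.isBetween n).dist_le hd hδ hp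
    rw [hcast] at hpk
    rw [h.dist_left, hpk, sub_add_cancel_left, abs_neg, wordDist_one_left] at hp1
    exact ⟨p, Nat.le_floor hp1, hd.symm p (x n) ▸ hpk⟩
  obtain ⟨p, -, hp⟩ :=
    (Ultrafilter.eventually_exists_mem_iff (finite_setOf_wordLength_le hS _)).1 hev
  obtain ⟨n, hk, hfp⟩ := (hp.and (hf p)).exists
  exact ⟨p, by exact_mod_cast (add_left_cancel (hk.symm.trans hfp)).symm⟩

end IsQuasiLine

lemma exists_isTripod [Infinite G] (hS : Generates S)
    (hδ : IsHyperbolicWith (wordDist S) δ) (hq : ¬ QuasiIsometric (wordDist S) intDist) (D : ℕ) :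
    ∃ y, IsTripod (wordDist S) (2 * δ + 1) D 1 y ∧ ∀ i, wordLength S (y i) = D := by
  obtain ⟨p, y, hy⟩ : ∃ p y, IsTripod (wordDist S) (2 * δ + 1) D p y := by
    by_contra hno
    obtain ⟨x, y, hxy⟩ := exists_isQuasiLine hS hδ hno
    obtain ⟨f, hf⟩ := exists_horofunction hS hxy.dist_left
    refine hq ⟨f, 1, 4 * D + 2 * δ, 0, le_rfl, ?_, le_rfl, hxy.qiEmbed hS hδ hf,
      fun k => ?_⟩
    · linarith [hδ.nonneg (isMetricFun_wordDist hS) 1, (Nat.cast_nonneg D : (0 : ℝ) ≤ D)]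
    obtain ⟨p, rfl⟩ := hxy.surjective hS hδ hf k
    exact ⟨p, by simp [intDist]⟩
  obtain ⟨z, hz, hzD⟩ := (hy.mul_left (leftInvariant_wordDist S) p⁻¹).exists_dist_eq
    (isMetricFun_wordDist hS) (isIntGeodesic_wordDist hS)
  rw [inv_mul_cancel] at hz hzD
  exact ⟨z, hz, fun i => by exact_mod_cast (wordDist_one_left (S := S) _).symm.trans (hzD i)⟩

end QuasiLine

/-! ### Exponential growth and drift -/

section Growth

variable {S : Finset G} {δ R : ℝ} {D n : ℕ} {v w z : G}

/-- The points of the ball of radius `n` outside the shadow of `w`, that is, with Gromov product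
with `w` at most `R`. -/
def outsideShadow (hS : Generates S) (R : ℝ) (n : ℕ) (w : G) : Finset G :=
  open scoped Classical in {z ∈ wordBall hS n | gromov (wordDist S) 1 w z ≤ R}

lemma mem_outsideShadow {hS : Generates S} : z ∈ outsideShadow hS R n w ↔
    wordLength S z ≤ n ∧ gromov (wordDist S) 1 w z ≤ R := by
  rw [outsideShadow, Finset.mem_filter, mem_wordBall]

lemma le_gromov_mul (hS : Generates S) (hz : gromov (wordDist S) 1 v⁻¹ z ≤ R) :
    wordLength S v - R ≤ gromov (wordDist S) 1 v (v * z) := by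
  have hadd := gromov_add_gromov (isMetricFun_wordDist hS) 1 v (v * z)
  rw [← (leftInvariant_wordDist S).gromov_mul_left v⁻¹ v, inv_mul_cancel, mul_one,
    inv_mul_cancel_left, wordDist_one_left] at hadd
  linarith

lemma mul_mem_outsideShadow (hS : Generates S) (hδ : IsHyperbolicWith (wordDist S) δ)
    (hvw : gromov (wordDist S) 1 w v ≤ R - δ) (hv : 2 * R < wordLength S v)
    (hz : z ∈ outsideShadow hS R n v⁻¹) :
    v * z ∈ outsideShadow hS R (wordLength S v + n) w := by
  rw [mem_outsideShadow] at hz ⊢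
  refine ⟨(wordLength_mul_le hS v z).trans (Nat.add_le_add_left hz.1 _), ?_⟩
  have hd := isMetricFun_wordDist hS
  have hvz := le_gromov_mul hS hz.2
  have h := hδ 1 (v * z) w v
  rw [gromov_comm hd _ (v * z) w, gromov_comm hd _ (v * z) v] at h
  by_contra! hlarge
  linarith [lt_min hlarge (show R < gromov (wordDist S) 1 v (v * z) by linarith)]

lemma two_pow_le_card_outsideShadow (hS : Generates S) (hδ : IsHyperbolicWith (wordDist S) δ)
    {y : Fin 3 → G} (hy : IsTripod (wordDist S) R D 1 y) (hyD : ∀ i, wordLength S (y i) = D)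
    (hR : 0 ≤ R) (hD : 2 * (R + 2 * δ) < D) (n : ℕ) (w : G) :
    2 ^ n ≤ (outsideShadow hS (R + 2 * δ) (n * D) w).card := by
  classical
  have hd := isMetricFun_wordDist hS
  have hδ₀ := hδ.nonneg hd 1
  induction n generalizing w with
  | zero =>
    refine Finset.card_pos.2 ⟨1, mem_outsideShadow.2 ⟨wordLength_one.trans_le (Nat.zero_le _), ?_⟩⟩
    rw [gromov_comm hd]
    linarith [gromov_le_dist hd 1 1 w, hd.refl 1]
  | succ n ih =>
    obtain ⟨k, hk⟩ := hy.exists_forall_ne_gromov_le hδ w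
    obtain ⟨i, j, hik, hjk, hij⟩ : ∃ i j, i ≠ k ∧ j ≠ k ∧ i ≠ j :=
      (by decide : ∀ k : Fin 3, ∃ i j, i ≠ k ∧ j ≠ k ∧ i ≠ j) k
    let A (l : Fin 3) := (outsideShadow hS (R + 2 * δ) (n * D) (y l)⁻¹).image (y l * ·)
    have hcard (l) : 2 ^ n ≤ (A l).card := by
      rw [Finset.card_image_of_injective _ (mul_right_injective _)]
      exact ih _
    have hsub {l} (hl : l ≠ k) : A l ⊆ outsideShadow hS (R + 2 * δ) ((n + 1) * D) w := by
      refine Finset.image_subset_iff.2 fun z hz => ?_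
      have h := mul_mem_outsideShadow hS hδ (by linarith [hk l hl]) (by rwa [hyD]) hz
      rwa [hyD, add_comm D, ← Nat.succ_mul] at h
    have hmem {l z} (hz : z ∈ A l) : D - (R + 2 * δ) ≤ gromov (wordDist S) 1 z (y l) := by
      obtain ⟨u, hu, rfl⟩ := Finset.mem_image.1 hz
      rw [gromov_comm hd, ← hyD l]
      exact le_gromov_mul hS (mem_outsideShadow.1 hu).2
    have hdisj : Disjoint (A i) (A j) := Finset.disjoint_left.2 fun z hzi hzj => by
      linarith [hδ 1 z (y i) (y j), hy.2 hij, le_min (hmem hzi) (hmem hzj)]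
    calc 2 ^ (n + 1) ≤ (A i).card + (A j).card := by
          rw [pow_succ, mul_two]
          exact add_le_add (hcard i) (hcard j)
      _ = (A i ∪ A j).card := (Finset.card_union_of_disjoint hdisj).symm
      _ ≤ _ := Finset.card_le_card (Finset.union_subset (hsub hik) (hsub hjk))

lemma exists_two_pow_le_card_wordBall [Infinite G] (hS : Generates S)
    (hδ : IsHyperbolicWith (wordDist S) δ) (hq : ¬ QuasiIsometric (wordDist S) intDist) :
    ∃ D : ℕ, ∀ n, 2 ^ n ≤ (wordBall hS (n * D)).card := by
  have hδ₀ := hδ.nonneg (isMetricFun_wordDist hS) 1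
  obtain ⟨D, hD⟩ := exists_nat_gt (2 * ((2 * δ + 1) + 2 * δ))
  obtain ⟨y, hy, hyD⟩ := exists_isTripod hS hδ hq D
  exact ⟨D, fun n => (two_pow_le_card_outsideShadow hS hδ hy hyD (by linarith) hD n 1).trans
    (Finset.card_le_card (Finset.filter_subset _ _))⟩

lemma exists_mul_le_of_two_pow_le {β : ℕ → ℕ} (hβ : Monotone β) (h : ∀ n, 2 ^ n ≤ β (n * D))
    (K₀ : ℕ) : ∃ K, K₀ ≤ K ∧ 16 * β K ≤ β (K + 8 * D) := by
  by_contra! hlt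
  have hup : ∀ n, β (K₀ + n * (8 * D)) ≤ 16 ^ n * β K₀ := by
    intro n
    induction n with
    | zero => simp
    | succ n ih =>
      calc β (K₀ + (n + 1) * (8 * D)) = β (K₀ + n * (8 * D) + 8 * D) := by ring_nf
        _ ≤ 16 * β (K₀ + n * (8 * D)) := (hlt _ (Nat.le_add_right _ _)).le
        _ ≤ 16 * (16 ^ n * β K₀) := Nat.mul_le_mul_left _ ih
        _ = 16 ^ (n + 1) * β K₀ := by ring
  have hle : ∀ n, 16 ^ n ≤ β K₀ := fun n =>
    Nat.le_of_mul_le_mul_left (a := 16 ^ n) (by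
      calc 16 ^ n * 16 ^ n = 2 ^ (8 * n) := by
            rw [← mul_pow, pow_mul]
            norm_num
        _ ≤ β (8 * n * D) := h _
        _ ≤ β (K₀ + n * (8 * D)) := hβ (by linarith)
        _ ≤ 16 ^ n * β K₀ := hup n) (by positivity)
  exact (Nat.lt_pow_self (by norm_num : 1 < 16)).not_ge (hle (β K₀))

lemma wordLength_mul_eq (hS : Generates S) (x u : G) : (wordLength S (x * u) : ℝ) =
    wordLength S x + wordLength S u - 2 * gromov (wordDist S) 1 x⁻¹ u := by
  have hd := isMetricFun_wordDist hS
  rw [gromov, hd.symm x⁻¹, hd.symm u, wordDist_one_left, wordDist_one_left, wordLength_inv hS,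
    wordDist, inv_inv]
  ring

-- Translating by a point of `[1, w]` at distance `t + s` brings the shadow into the smaller ball.
open scoped Classical in
lemma card_filter_le_gromov_le (hS : Generates S) (hδ : IsHyperbolicWith (wordDist S) δ) {s : ℕ}
    (hs : 2 * δ ≤ s) (n t : ℕ) (w : G) :
    {u ∈ wordBall hS (n + t) | ((t + s : ℕ) : ℝ) ≤ gromov (wordDist S) 1 w u}.card ≤
      (wordBall hS n).card := by
  have hd := isMetricFun_wordDist hS
  rcases le_or_gt ((t + s : ℕ) : ℝ) (wordDist S 1 w) with hw | hw
  · obtain ⟨a, haw, ha⟩ := isIntGeodesic_wordDist hS hw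
    refine Finset.card_le_card_of_injOn (a⁻¹ * ·) (fun u hu => ?_) (mul_right_injective _).injOn
    obtain ⟨hu, hwu⟩ := Finset.mem_filter.1 hu
    have hu' : (wordLength S u : ℝ) ≤ n + t := by exact_mod_cast mem_wordBall.1 hu
    have hau := hδ 1 w a u
    rw [haw.gromov_left hd, ha, min_eq_left hwu, gromov, hd.symm a, ha, hd.symm u,
      wordDist_one_left] at hau
    push_cast at hau
    exact mem_wordBall.2 (Nat.cast_le.1 (show wordDist S a u ≤ n by linarith))
  · rw [Finset.filter_false_of_mem fun u _ hu => (hu.trans (gromov_le_dist hd 1 w u)).not_gt hw]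
    exact Nat.zero_le _

/-- Averaging over right translations by `B` increases the function `ℓ` by at least one. -/
def HasDrift (B : Finset G) (ℓ : G → ℝ) : Prop :=
  ∀ x, B.card * (ℓ x + 1) ≤ ∑ u ∈ B, ℓ (x * u)

lemma hasDrift_wordBall (hS : Generates S) (hδ : IsHyperbolicWith (wordDist S) δ)
    {s t K : ℕ} (hs : 2 * δ ≤ s) (hK : 100 * (t + s + 1) ≤ K)
    (hcard : 16 * (wordBall hS K).card ≤ (wordBall hS (K + t)).card) :
    HasDrift (wordBall hS (K + t)) fun x => wordLength S x := by
  classical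
  intro x
  have hd := isMetricFun_wordDist hS
  set B := wordBall hS (K + t)
  set far := {u ∈ B | ((t + s : ℕ) : ℝ) ≤ gromov (wordDist S) 1 x⁻¹ u}
  have hpoint : ∀ u ∈ B, (wordLength S x + (K - 2 * (t + s)) : ℝ) -
      (if u ∈ far ∪ wordBall hS K then 2 * (K : ℝ) else 0) ≤ wordLength S (x * u) := by
    intro u hu
    have hle := gromov_comm hd 1 x⁻¹ u ▸ gromov_le_dist hd 1 u x⁻¹
    have huB : (wordLength S u : ℝ) ≤ K + t := by exact_mod_cast mem_wordBall.1 hu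
    rw [wordDist_one_left] at hle
    rw [wordLength_mul_eq hS]
    split_ifs with hbad
    · linarith [(Nat.cast_nonneg s : (0 : ℝ) ≤ s), (Nat.cast_nonneg t : (0 : ℝ) ≤ t)]
    · simp only [far, Finset.mem_union, Finset.mem_filter, hu, true_and, mem_wordBall, not_or,
        not_le, Nat.cast_add] at hbad
      linarith [show (K : ℝ) < wordLength S u from Nat.cast_lt.2 hbad.2]
  have hbad : (8 * (B ∩ (far ∪ wordBall hS K)).card : ℝ) ≤ B.card := by
    have hfar : far.card ≤ (wordBall hS K).card := card_filter_le_gromov_le hS hδ hs K t x⁻¹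
    have hunion := Finset.card_union_le far (wordBall hS K)
    have hinter := Finset.card_le_card (Finset.inter_subset_right (s₁ := B)
      (s₂ := far ∪ wordBall hS K))
    exact_mod_cast (by omega : 8 * (B ∩ (far ∪ wordBall hS K)).card ≤ B.card)
  have hsum := Finset.sum_le_sum hpoint
  rw [Finset.sum_sub_distrib, Finset.sum_const, Finset.sum_ite_mem, Finset.sum_const, nsmul_eq_mul,
    nsmul_eq_mul] at hsum
  have hK' : (100 * (t + s + 1) : ℝ) ≤ K := by exact_mod_cast hK
  nlinarith [mul_le_mul_of_nonneg_right hbad (Nat.cast_nonneg K : (0 : ℝ) ≤ K),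
    mul_le_mul_of_nonneg_left hK' (Nat.cast_nonneg B.card : (0 : ℝ) ≤ B.card)]

lemma exists_hasDrift [Infinite G] (hS : Generates S) (hhyp : IsHyperbolic (wordDist S))
    (hq : ¬ QuasiIsometric (wordDist S) intDist) :
    ∃ K, HasDrift (wordBall hS K) fun x => wordLength S x := by
  obtain ⟨δ, -, hδ⟩ := hhyp
  obtain ⟨D, hD⟩ := exists_two_pow_le_card_wordBall hS hδ hq
  obtain ⟨K, hK, hcard⟩ := exists_mul_le_of_two_pow_le
    (fun _ _ h => Finset.card_le_card (wordBall_mono hS h)) hD (100 * (8 * D + ⌈2 * δ⌉₊ + 1))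
  exact ⟨_, hasDrift_wordBall hS hδ (Nat.le_ceil _) hK hcard⟩

end Growth

/-! ### Poincaré inequalities -/

section SquareSums

variable {X : Type*}

/-- The squared `ℓ²` norm. -/
def sqNorm (f : X → ℝ≥0) : ℝ≥0∞ := ∑' x, (f x : ℝ≥0∞) ^ 2

/-- The squared `ℓ²` distance. -/
def sqDist (f h : X → ℝ≥0) : ℝ≥0∞ := ∑' x, edist (f x) (h x) ^ 2

lemma sqDist_self (f : X → ℝ≥0) : sqDist f f = 0 := by simp [sqDist]

lemma sqDist_comm (f h : X → ℝ≥0) : sqDist f h = sqDist h f := by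
  simp only [sqDist, edist_comm]

lemma coe_edist_sq (a b : ℝ≥0) : edist a b ^ 2 = ((nndist a b ^ 2 : ℝ≥0) : ℝ≥0∞) := by
  rw [edist_nndist, ENNReal.coe_pow]

lemma sqDist_triangle (f h k : X → ℝ≥0) : sqDist f k ≤ 2 * (sqDist f h + sqDist h k) := by
  simp only [sqDist, ← ENNReal.tsum_add, ← ENNReal.tsum_mul_left, coe_edist_sq]
  refine ENNReal.tsum_le_tsum fun x => ?_
  norm_cast
  exact (pow_le_pow_left' (nndist_triangle _ (h x) _) 2).trans add_sq_le

lemma edist_sq_add_two_mul (a b : ℝ≥0) :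
    edist a b ^ 2 + 2 * (a * b) = (a : ℝ≥0∞) ^ 2 + (b : ℝ≥0∞) ^ 2 := by
  rw [coe_edist_sq]
  norm_cast
  rw [← NNReal.coe_inj]
  push_cast
  rw [NNReal.dist_eq, sq_abs]
  ring

-- The weighted arithmetic-geometric mean inequality `2ab ≤ a² (w/v) + b² (v/w)`.
lemma sq_add_sq_le_edist_sq_add (a b : ℝ≥0) {v w : ℝ≥0} (hv : v ≠ 0) (hw : w ≠ 0) :
    (a : ℝ≥0∞) ^ 2 + (b : ℝ≥0∞) ^ 2 ≤
      edist a b ^ 2 + ((a : ℝ≥0∞) ^ 2 * (w / v : ℝ≥0) + (b : ℝ≥0∞) ^ 2 * (v / w : ℝ≥0)) := by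
  rw [← edist_sq_add_two_mul]
  gcongr
  norm_cast
  rw [← NNReal.coe_le_coe, ← sub_nonneg]
  push_cast
  calc (0 : ℝ) ≤ (a * w - b * v) ^ 2 / (v * w) := by positivity
    _ = a ^ 2 * (w / v) + b ^ 2 * (v / w) - 2 * (a * b) := by
      field_simp
      ring

lemma sum_tsum_sq_mul_le {ι : Type*} {B : Finset ι} {ρ : ℝ≥0} {c : X → ι → ℝ≥0}
    (hc : ∀ x, ∑ u ∈ B, c x u ≤ ρ) (f : X → ℝ≥0) :
    ∑ u ∈ B, ∑' x, (f x : ℝ≥0∞) ^ 2 * c x u ≤ sqNorm f * ρ := by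
  rw [← Summable.tsum_finsetSum fun _ _ => ENNReal.summable, sqNorm, ← ENNReal.tsum_mul_right]
  refine ENNReal.tsum_le_tsum fun x => ?_
  rw [← Finset.mul_sum]
  gcongr
  exact_mod_cast hc x

lemma sqNorm_add_add_sqNorm_nndist (f h : X → ℝ≥0) :
    sqNorm (fun x => f x + h x) + sqNorm (fun x => nndist (f x) (h x)) =
      2 * (sqNorm f + sqNorm h) := by
  simp only [sqNorm, ← ENNReal.tsum_add, ← ENNReal.tsum_mul_left]
  refine tsum_congr fun x => ?_
  norm_cast
  rw [← NNReal.coe_inj]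
  push_cast
  rw [NNReal.dist_eq, sq_abs]
  ring

lemma edist_add_sq_add_edist_nndist_sq_le (a b a' b' : ℝ≥0) :
    edist (a + b) (a' + b') ^ 2 + edist (nndist a b) (nndist a' b') ^ 2 ≤
      2 * (edist a b' ^ 2 + edist b a' ^ 2) := by
  simp only [coe_edist_sq]
  norm_cast
  rw [← NNReal.coe_le_coe]
  push_cast
  simp only [NNReal.dist_eq, sq_abs]
  push_cast
  simp only [NNReal.dist_eq]
  have habs : (|(a : ℝ) - b| - |(a' : ℝ) - b'|) ^ 2 ≤ ((a : ℝ) - b - (b' - a')) ^ 2 := by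
    rw [abs_sub_comm (a' : ℝ), sq_le_sq]
    exact abs_abs_sub_abs_le _ _
  linarith

lemma sqDist_add_add_sqDist_nndist_le (f h f' h' : X → ℝ≥0) :
    sqDist (fun x => f x + h x) (fun x => f' x + h' x) +
      sqDist (fun x => nndist (f x) (h x)) (fun x => nndist (f' x) (h' x)) ≤
      2 * (sqDist f h' + sqDist h f') := by
  simp only [sqDist, ← ENNReal.tsum_add, ← ENNReal.tsum_mul_left]
  exact ENNReal.tsum_le_tsum fun x => edist_add_sq_add_edist_nndist_sq_le _ _ _ _

end SquareSums

section SpectralGap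

variable {m f h : G → ℝ≥0} {C : ℝ≥0}

lemma sqNorm_mul_right (f : G → ℝ≥0) (g : G) : sqNorm (fun x => f (x * g)) = sqNorm f :=
  (Equiv.mulRight g).tsum_eq fun x => (f x : ℝ≥0∞) ^ 2

lemma sqDist_mul_right (f h : G → ℝ≥0) (g : G) :
    sqDist (fun x => f (x * g)) (fun x => h (x * g)) = sqDist f h :=
  (Equiv.mulRight g).tsum_eq fun x => edist (f x) (h x) ^ 2

lemma sqDist_mul_right_inv (f h : G → ℝ≥0) (g : G) :
    sqDist f (fun x => h (x * g⁻¹)) = sqDist h fun x => f (x * g) := by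
  rw [sqDist_comm, ← sqDist_mul_right (fun x => h (x * g⁻¹)) f g]
  simp only [mul_inv_cancel_right]

/-- The Dirichlet form of the random walk with weights `m`, polarized so as to compare two
functions. -/
def energy (m f h : G → ℝ≥0) : ℝ≥0∞ := ∑' g, m g * sqDist f fun x => h (x * g)

/-- The Poincaré inequality `‖f‖² ≤ C * energy f` for the random walk with weights `m`. -/
def PoincareInequality (m : G → ℝ≥0) (C : ℝ≥0) : Prop :=
  ∀ f : G → ℝ≥0, sqNorm f ≠ ⊤ → sqNorm f ≤ C * energy m f f

lemma energy_comm (hm : ∀ g, m g⁻¹ = m g) (f h : G → ℝ≥0) : energy m f h = energy m h f := by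
  rw [energy, ← (Equiv.inv G).tsum_eq]
  simp only [Equiv.inv_apply, hm, sqDist_mul_right_inv, energy]

lemma exists_supersolution {B : Finset G} (hB : B.Nonempty) {ℓ : G → ℝ} (hdrift : HasDrift B ℓ)
    {K : ℝ} (hK : ∀ x, ∀ u ∈ B, |ℓ (x * u) - ℓ x| ≤ K) :
    ∃ ρ < (B.card : ℝ≥0), ∃ V : G → ℝ≥0, (∀ x, V x ≠ 0) ∧ ∀ x, ∑ u ∈ B, V (x * u) / V x ≤ ρ := by
  obtain ⟨ε, hε₀, hε₁, hεK⟩ : ∃ ε : ℝ, 0 < ε ∧ ε * K ≤ 1 ∧ ε * K ^ 2 < 1 := by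
    have hpos : 0 < 1 + K ^ 2 := by positivity
    refine ⟨(1 + K ^ 2)⁻¹, inv_pos.2 hpos, ?_, ?_⟩
    · rw [inv_mul_le_one₀ hpos]
      nlinarith
    · rw [inv_mul_lt_one₀ hpos]
      linarith
  have hterm : ∀ x, ∀ u ∈ B, Real.exp (-ε * ℓ (x * u)) / Real.exp (-ε * ℓ x) ≤
      1 + ε * ℓ x + (ε * K) ^ 2 - ε * ℓ (x * u) := by
    intro x u hu
    have habs : |-ε * (ℓ (x * u) - ℓ x)| ≤ ε * K := by
      rw [abs_mul, abs_neg, abs_of_pos hε₀]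
      gcongr
      exact hK x u hu
    rw [← Real.exp_sub, ← mul_sub]
    linarith [(abs_le.1 (Real.abs_exp_sub_one_sub_id_le (habs.trans hε₁))).2,
      sq_le_sq' (abs_le.1 habs).1 (abs_le.1 habs).2]
  have hsum : ∀ x, ∑ u ∈ B, Real.exp (-ε * ℓ (x * u)) / Real.exp (-ε * ℓ x) ≤
      B.card * (1 - ε * (1 - ε * K ^ 2)) := by
    intro x
    refine (Finset.sum_le_sum (hterm x)).trans ?_
    rw [Finset.sum_sub_distrib, Finset.sum_const, nsmul_eq_mul, ← Finset.mul_sum]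
    linarith [mul_le_mul_of_nonneg_left (hdrift x) hε₀.le]
  have hcard : (B.card : ℝ) * (1 - ε * (1 - ε * K ^ 2)) < B.card :=
    mul_lt_of_lt_one_right (by exact_mod_cast hB.card_pos)
      (sub_lt_self _ (mul_pos hε₀ (sub_pos.2 hεK)))
  refine ⟨NNReal.mk _ ((Finset.sum_nonneg fun u _ => by positivity).trans (hsum 1)),
    by exact_mod_cast hcard, fun x => NNReal.mk (Real.exp (-ε * ℓ x)) (Real.exp_pos _).le,
    fun x => NNReal.coe_ne_zero.1 (Real.exp_ne_zero _), fun x => ?_⟩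
  rw [← NNReal.coe_le_coe]
  push_cast
  exact hsum x

-- Schur's test for the averaging operator over `B`, with the supersolution `V` as weight.
lemma two_mul_card_mul_sqNorm_le {B : Finset G} (hB : ∀ u ∈ B, u⁻¹ ∈ B) {ρ : ℝ≥0} {V : G → ℝ≥0}
    (hV₀ : ∀ x, V x ≠ 0) (hV : ∀ x, ∑ u ∈ B, V (x * u) / V x ≤ ρ) (f : G → ℝ≥0) :
    B.card * (2 * sqNorm f) ≤
      ∑ u ∈ B, sqDist f (fun x => f (x * u)) + 2 * (sqNorm f * ρ) := by
  have hshift : ∀ u, 2 * sqNorm f ≤ sqDist f (fun x => f (x * u)) +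
      (∑' x, (f x : ℝ≥0∞) ^ 2 * (V (x * u) / V x : ℝ≥0) +
        ∑' x, (f x : ℝ≥0∞) ^ 2 * (V (x * u⁻¹) / V x : ℝ≥0)) := by
    intro u
    rw [← (Equiv.mulRight u).tsum_eq fun x => (f x : ℝ≥0∞) ^ 2 * (V (x * u⁻¹) / V x : ℝ≥0),
      two_mul]
    nth_rewrite 2 [← sqNorm_mul_right f u]
    simp only [sqNorm, sqDist, ← ENNReal.tsum_add, Equiv.coe_mulRight, mul_inv_cancel_right]
    exact ENNReal.tsum_le_tsum fun x => sq_add_sq_le_edist_sq_add _ _ (hV₀ _) (hV₀ _)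
  have hinv : ∑ u ∈ B, ∑' x, (f x : ℝ≥0∞) ^ 2 * (V (x * u⁻¹) / V x : ℝ≥0) =
      ∑ u ∈ B, ∑' x, (f x : ℝ≥0∞) ^ 2 * (V (x * u) / V x : ℝ≥0) :=
    Finset.sum_nbij' (·⁻¹) (·⁻¹) hB hB (fun u _ => inv_inv u) (fun u _ => inv_inv u)
      fun _ _ => rfl
  calc B.card * (2 * sqNorm f)
      ≤ ∑ u ∈ B, (sqDist f (fun x => f (x * u)) +
        (∑' x, (f x : ℝ≥0∞) ^ 2 * (V (x * u) / V x : ℝ≥0) +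
          ∑' x, (f x : ℝ≥0∞) ^ 2 * (V (x * u⁻¹) / V x : ℝ≥0))) := by
        rw [← nsmul_eq_mul]
        exact Finset.card_nsmul_le_sum _ _ _ fun u _ => hshift u
    _ ≤ ∑ u ∈ B, sqDist f (fun x => f (x * u)) + 2 * (sqNorm f * ρ) := by
        rw [Finset.sum_add_distrib, Finset.sum_add_distrib, hinv, ← two_mul]
        gcongr
        exact sum_tsum_sq_mul_le hV f

lemma exists_sqNorm_le_sum_sqDist {B : Finset G} (hB : ∀ u ∈ B, u⁻¹ ∈ B) {ρ : ℝ≥0}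
    (hρ : ρ < B.card) {V : G → ℝ≥0}
    (hV₀ : ∀ x, V x ≠ 0) (hV : ∀ x, ∑ u ∈ B, V (x * u) / V x ≤ ρ) :
    ∃ C : ℝ≥0, ∀ f : G → ℝ≥0, sqNorm f ≠ ⊤ →
      sqNorm f ≤ C * ∑ u ∈ B, sqDist f fun x => f (x * u) := by
  obtain ⟨κ, hκ₀, hκ⟩ := lt_iff_exists_pos_add.1 hρ
  refine ⟨(2 * κ)⁻¹, fun f hf => ?_⟩
  rw [ENNReal.coe_inv (by positivity), ← ENNReal.mul_le_iff_le_inv (by simpa using hκ₀.ne')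
    ENNReal.coe_ne_top]
  have hfin : 2 * (sqNorm f * ρ) ≠ ⊤ :=
    ENNReal.mul_ne_top ENNReal.ofNat_ne_top (ENNReal.mul_ne_top hf ENNReal.coe_ne_top)
  refine (ENNReal.add_le_add_iff_right hfin).1 ?_
  calc ((2 * κ : ℝ≥0) : ℝ≥0∞) * sqNorm f + 2 * (sqNorm f * ρ)
      = ((ρ + κ : ℝ≥0) : ℝ≥0∞) * (2 * sqNorm f) := by
        push_cast
        ring
    _ = B.card * (2 * sqNorm f) := by rw [hκ, ENNReal.coe_natCast]
    _ ≤ _ := two_mul_card_mul_sqNorm_le hB hV₀ hV f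

lemma exists_sqDist_mul_right_le_energy (hm : Subgroup.closure {g | m g ≠ 0} = ⊤) (g : G) :
    ∃ C : ℝ≥0, ∀ f : G → ℝ≥0, (sqDist f fun x => f (x * g)) ≤ C * energy m f f := by
  induction (hm ▸ Subgroup.mem_top g : g ∈ Subgroup.closure {g | m g ≠ 0})
    using Subgroup.closure_induction with
  | mem g hg =>
    refine ⟨(m g)⁻¹, fun f => ?_⟩
    rw [ENNReal.coe_inv hg,
      ← ENNReal.mul_le_iff_le_inv (ENNReal.coe_ne_zero.2 hg) ENNReal.coe_ne_top]
    exact ENNReal.le_tsum (f := fun g => m g * sqDist f fun x => f (x * g)) g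
  | one => exact ⟨0, fun f => by simp [sqDist_self]⟩
  | mul a b _ _ ha hb =>
    obtain ⟨A, hA⟩ := ha
    obtain ⟨B, hB⟩ := hb
    refine ⟨2 * (A + B), fun f => ?_⟩
    calc (sqDist f fun x => f (x * (a * b)))
        ≤ 2 * (sqDist f (fun x => f (x * a)) +
            sqDist (fun x => f (x * a)) fun x => f (x * a * b)) := by
          simpa only [mul_assoc] using sqDist_triangle _ _ _
      _ = 2 * (sqDist f (fun x => f (x * a)) + sqDist f fun x => f (x * b)) := by
          rw [sqDist_mul_right f (fun x => f (x * b)) a]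
      _ ≤ 2 * (A * energy m f f + B * energy m f f) :=
          mul_le_mul_right (add_le_add (hA f) (hB f)) _
      _ = (2 * (A + B) : ℝ≥0) * energy m f f := by
          push_cast
          ring
  | inv a _ ha =>
    obtain ⟨A, hA⟩ := ha
    exact ⟨A, fun f => sqDist_mul_right_inv f f a ▸ hA f⟩

lemma exists_poincareInequality {B : Finset G} (hB₁ : B.Nonempty) (hB : ∀ u ∈ B, u⁻¹ ∈ B)
    {ℓ : G → ℝ} (hdrift : HasDrift B ℓ) {K : ℝ} (hK : ∀ x, ∀ u ∈ B, |ℓ (x * u) - ℓ x| ≤ K)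
    (hm : Subgroup.closure {g | m g ≠ 0} = ⊤) : ∃ C, PoincareInequality m C := by
  obtain ⟨ρ, hρ, V, hV₀, hV⟩ := exists_supersolution hB₁ hdrift hK
  obtain ⟨C, hC⟩ := exists_sqNorm_le_sum_sqDist hB hρ hV₀ hV
  choose A hA using exists_sqDist_mul_right_le_energy hm
  refine ⟨C * ∑ u ∈ B, A u, fun f hf => (hC f hf).trans ?_⟩
  rw [ENNReal.coe_mul, mul_assoc, ENNReal.ofNNReal_finsetSum, Finset.sum_mul]
  gcongr with u
  exact hA u f

/-! ### The spectral gap -/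

lemma energy_add_add_energy_nndist_le (m f h : G → ℝ≥0) :
    energy m (fun x => f x + h x) (fun x => f x + h x) +
      energy m (fun x => nndist (f x) (h x)) (fun x => nndist (f x) (h x)) ≤
      2 * (energy m f h + energy m h f) := by
  simp only [energy, ← ENNReal.tsum_add, ← ENNReal.tsum_mul_left, ← mul_add]
  refine ENNReal.tsum_le_tsum fun g => ?_
  rw [mul_left_comm]
  gcongr
  exact sqDist_add_add_sqDist_nndist_le _ _ _ _

-- The Poincaré inequality for `f + h` and `|f - h|` excludes the eigenvalue `-1` as well as `1`.
lemma PoincareInequality.sqNorm_add_le (hC : PoincareInequality m C) (hm : ∀ g, m g⁻¹ = m g)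
    (hf : sqNorm f ≠ ⊤) (hh : sqNorm h ≠ ⊤) : sqNorm f + sqNorm h ≤ 2 * C * energy m f h := by
  have hnorm := sqNorm_add_add_sqNorm_nndist f h
  have hfin : sqNorm (fun x => f x + h x) + sqNorm (fun x => nndist (f x) (h x)) ≠ ⊤ := by
    rw [hnorm]
    exact ENNReal.mul_ne_top ENNReal.ofNat_ne_top (ENNReal.add_ne_top.2 ⟨hf, hh⟩)
  rw [ENNReal.add_ne_top] at hfin
  refine (ENNReal.mul_le_mul_iff_right two_ne_zero ENNReal.ofNat_ne_top).1 ?_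
  calc 2 * (sqNorm f + sqNorm h) = _ := hnorm.symm
    _ ≤ C * energy m (fun x => f x + h x) (fun x => f x + h x) +
        C * energy m (fun x => nndist (f x) (h x)) (fun x => nndist (f x) (h x)) :=
      add_le_add (hC _ hfin.1) (hC _ hfin.2)
    _ ≤ C * (2 * (energy m f h + energy m h f)) := by
      rw [← mul_add]
      gcongr
      exact energy_add_add_energy_nndist_le m f h
    _ = 2 * (2 * C * energy m f h) := by
      rw [energy_comm hm h f]
      ring

lemma tsum_mul_tsum_mul_right (u v w : G → ℝ≥0∞) :
    ∑' g, u g * ∑' x, v x * w (x * g) = ∑' y, w y * ∑' x, v x * u (x⁻¹ * y) := by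
  simp only [← ENNReal.tsum_mul_left]
  rw [ENNReal.tsum_comm, ENNReal.tsum_comm (f := fun y x => w y * (v x * u (x⁻¹ * y)))]
  refine tsum_congr fun x => ?_
  rw [← (Equiv.mulLeft x).tsum_eq fun y => w y * (v x * u (x⁻¹ * y))]
  refine tsum_congr fun g => ?_
  rw [Equiv.coe_mulLeft, inv_mul_cancel_left]
  ring

lemma energy_add_two_mul_sqNorm (hm : ∑' g, (m g : ℝ≥0∞) = 1)
    (hconv : ∀ g, (h g : ℝ≥0∞) = ∑' y, (f y : ℝ≥0∞) * m (y⁻¹ * g)) :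
    energy m f h + 2 * sqNorm h = sqNorm f + sqNorm h := by
  have hcross : ∑' g, (m g : ℝ≥0∞) * ∑' x, (f x * h (x * g) : ℝ≥0∞) = sqNorm h := by
    rw [tsum_mul_tsum_mul_right (fun g => (m g : ℝ≥0∞)) (fun x => (f x : ℝ≥0∞))
      fun x => (h x : ℝ≥0∞)]
    simp only [← hconv, ← sq, sqNorm]
  have hg : ∀ g, sqDist f (fun x => h (x * g)) + 2 * ∑' x, (f x * h (x * g) : ℝ≥0∞) =
      sqNorm f + sqNorm h := by
    intro g
    rw [← sqNorm_mul_right h g]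
    simp only [sqDist, sqNorm, ← ENNReal.tsum_mul_left, ← ENNReal.tsum_add, edist_sq_add_two_mul]
  calc energy m f h + 2 * sqNorm h
      = ∑' g, (m g : ℝ≥0∞) * (sqDist f (fun x => h (x * g)) +
          2 * ∑' x, (f x * h (x * g) : ℝ≥0∞)) := by
        simp only [mul_add, ENNReal.tsum_add, energy, mul_left_comm _ (2 : ℝ≥0∞),
          ENNReal.tsum_mul_left, hcross]
    _ = sqNorm f + sqNorm h := by
        simp only [hg, ENNReal.tsum_mul_right, hm, one_mul]

lemma PoincareInequality.sqNorm_conv_le (hC : PoincareInequality m C) (hsymm : ∀ g, m g⁻¹ = m g)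
    (hm : ∑' g, (m g : ℝ≥0∞) = 1) (hf : sqNorm f ≠ ⊤) (hh : sqNorm h ≠ ⊤)
    (hconv : ∀ g, (h g : ℝ≥0∞) = ∑' y, (f y : ℝ≥0∞) * m (y⁻¹ * g)) :
    (1 + 2 * C) * sqNorm h ≤ 2 * C * sqNorm f := by
  have hfin : 2 * C * sqNorm h ≠ ⊤ :=
    ENNReal.mul_ne_top (ENNReal.mul_ne_top ENNReal.ofNat_ne_top ENNReal.coe_ne_top) hh
  refine (ENNReal.add_le_add_iff_right hfin).1 ?_
  calc (1 + 2 * C) * sqNorm h + 2 * C * sqNorm h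
      = sqNorm h + 2 * C * (2 * sqNorm h) := by ring
    _ ≤ (sqNorm f + sqNorm h) + 2 * C * (2 * sqNorm h) := by
        gcongr
        exact le_add_self
    _ ≤ 2 * C * energy m f h + 2 * C * (2 * sqNorm h) := by
        gcongr
        exact hC.sqNorm_add_le hsymm hf hh
    _ = 2 * C * sqNorm f + 2 * C * sqNorm h := by
        rw [← mul_add, energy_add_two_mul_sqNorm hm hconv, mul_add]

end SpectralGap

/-! ### Decay of the random walk -/

section RandomWalk

variable {μ : G → ℝ} {C : ℝ≥0}

lemma IsProbDensity.hasSum_inv_mul (hprob : IsProbDensity μ) (g : G) :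
    HasSum (fun y => μ (y⁻¹ * g)) 1 :=
  ((Equiv.inv G).trans (Equiv.mulRight g)).hasSum_iff.2 hprob.2

lemma IsProbDensity.tsum_ofReal {X : Type*} {p : X → ℝ} (hp : IsProbDensity p) :
    ∑' x, ENNReal.ofReal (p x) = 1 := by
  rw [← ENNReal.ofReal_tsum_of_nonneg hp.1 hp.2.summable, hp.2.tsum_eq, ENNReal.ofReal_one]

lemma IsProbDensity.summable_mul_inv_mul (hprob : IsProbDensity μ) {f : G → ℝ}
    (hf₀ : ∀ x, 0 ≤ f x) (hf₁ : ∀ x, f x ≤ 1) (g : G) : Summable fun y => f y * μ (y⁻¹ * g) :=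
  (hprob.hasSum_inv_mul g).summable.of_nonneg_of_le (fun y => mul_nonneg (hf₀ y) (hprob.1 _))
    fun y => mul_le_of_le_one_left (hprob.1 _) (hf₁ y)

lemma convPow_nonneg (hprob : IsProbDensity μ) : ∀ n g, 0 ≤ convPow μ n g
  | 0, g => by
    simp only [convPow]
    split_ifs <;> norm_num
  | n + 1, g => tsum_nonneg fun y => mul_nonneg (convPow_nonneg hprob n y) (hprob.1 _)

lemma convPow_le_one (hprob : IsProbDensity μ) : ∀ n g, convPow μ n g ≤ 1
  | 0, g => by
    simp only [convPow]
    split_ifs <;> norm_num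
  | n + 1, g => by
    have hsum := hprob.hasSum_inv_mul g
    rw [convPow, ← hsum.tsum_eq]
    exact (hprob.summable_mul_inv_mul (convPow_nonneg hprob n) (convPow_le_one hprob n)
      g).tsum_le_tsum (fun y => mul_le_of_le_one_left (hprob.1 _) (convPow_le_one hprob n y))
      hsum.summable

lemma ofReal_convPow_succ (hprob : IsProbDensity μ) (n : ℕ) (g : G) :
    ENNReal.ofReal (convPow μ (n + 1) g) =
      ∑' y, ENNReal.ofReal (convPow μ n y) * ENNReal.ofReal (μ (y⁻¹ * g)) := by
  rw [convPow, ENNReal.ofReal_tsum_of_nonneg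
    (fun y => mul_nonneg (convPow_nonneg hprob n y) (hprob.1 _))
    (hprob.summable_mul_inv_mul (convPow_nonneg hprob n) (convPow_le_one hprob n) g)]
  exact tsum_congr fun y => ENNReal.ofReal_mul (convPow_nonneg hprob n y)

lemma tsum_ofReal_convPow_mul_le (hprob : IsProbDensity μ) {E : G → ℝ≥0∞} (hE₁ : E 1 ≤ 1)
    (hE : ∀ x y, E (x * y) ≤ E x * E y) (n : ℕ) :
    ∑' x, ENNReal.ofReal (convPow μ n x) * E x ≤ (∑' x, ENNReal.ofReal (μ x) * E x) ^ n := by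
  induction n with
  | zero =>
    rw [tsum_eq_single 1 fun x hx => by simp [convPow, hx]]
    simpa [convPow] using hE₁
  | succ n ih =>
    calc ∑' x, ENNReal.ofReal (convPow μ (n + 1) x) * E x
        = ∑' g, ENNReal.ofReal (μ g) * ∑' x, ENNReal.ofReal (convPow μ n x) * E (x * g) := by
          rw [tsum_mul_tsum_mul_right (fun g => ENNReal.ofReal (μ g))
            (fun x => ENNReal.ofReal (convPow μ n x)) E]
          exact tsum_congr fun x => by rw [ofReal_convPow_succ hprob, mul_comm]
      _ ≤ ∑' g, ENNReal.ofReal (μ g) * ∑' x, ENNReal.ofReal (convPow μ n x) * (E x * E g) := by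
          gcongr
          exact hE _ _
      _ = (∑' x, ENNReal.ofReal (convPow μ n x) * E x) * ∑' g, ENNReal.ofReal (μ g) * E g := by
          simp only [← mul_assoc, ENNReal.tsum_mul_right]
          rw [← ENNReal.tsum_mul_left]
          exact tsum_congr fun g => by ring
      _ ≤ (∑' x, ENNReal.ofReal (μ x) * E x) ^ (n + 1) := by
          rw [pow_succ]
          gcongr

lemma sqNorm_convPow_le_one (hprob : IsProbDensity μ) (n : ℕ) :
    sqNorm (fun x => (convPow μ n x).toNNReal) ≤ 1 := by
  have hmass := tsum_ofReal_convPow_mul_le hprob (E := 1) le_rfl (fun _ _ => by simp) n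
  simp only [Pi.one_apply, mul_one, hprob.tsum_ofReal, one_pow] at hmass
  refine (ENNReal.tsum_le_tsum fun x => ?_).trans hmass
  exact pow_le_of_le_one zero_le (by simpa using convPow_le_one hprob n x) two_ne_zero

lemma PoincareInequality.pow_mul_sqNorm_convPow_le
    (hC : PoincareInequality (fun g => (μ g).toNNReal) C) (hprob : IsProbDensity μ)
    (hsymm : IsSymmetric μ) (n : ℕ) :
    (1 + 2 * C) ^ n * sqNorm (fun x => (convPow μ n x).toNNReal) ≤ (2 * C) ^ n := by
  have hfin : ∀ n, sqNorm (fun x => (convPow μ n x).toNNReal) ≠ ⊤ := fun n =>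
    ne_top_of_le_ne_top ENNReal.one_ne_top (sqNorm_convPow_le_one hprob n)
  induction n with
  | zero => simpa using sqNorm_convPow_le_one hprob 0
  | succ n ih =>
    have hstep := hC.sqNorm_conv_le (fun g => by rw [hsymm g]) hprob.tsum_ofReal (hfin n)
      (hfin (n + 1)) (ofReal_convPow_succ hprob n)
    calc (1 + 2 * C) ^ (n + 1) * sqNorm (fun x => (convPow μ (n + 1) x).toNNReal)
        ≤ (1 + 2 * C) ^ n * (2 * C * sqNorm fun x => (convPow μ n x).toNNReal) := by
          rw [pow_succ, mul_assoc]
          gcongr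
      _ = 2 * C * ((1 + 2 * C) ^ n * sqNorm fun x => (convPow μ n x).toNNReal) := by ring
      _ ≤ (2 * C) ^ (n + 1) := by
          rw [pow_succ']
          gcongr

lemma PoincareInequality.exists_convPow_le_pow
    (hC : PoincareInequality (fun g => (μ g).toNNReal) C) (hprob : IsProbDensity μ)
    (hsymm : IsSymmetric μ) : ∃ ρ : ℝ, 0 ≤ ρ ∧ ρ < 1 ∧ ∀ n x, convPow μ n x ≤ ρ ^ n := by
  have hpos : (0 : ℝ) < 1 + 2 * C := by positivity
  refine ⟨√(2 * C / (1 + 2 * C)), Real.sqrt_nonneg _, ?_, fun n x => ?_⟩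
  · rw [Real.sqrt_lt' one_pos, one_pow, div_lt_one hpos]
    exact lt_one_add _
  have hterm : (1 + 2 * C) ^ n * ((convPow μ n x).toNNReal : ℝ≥0∞) ^ 2 ≤ (2 * C) ^ n :=
    (mul_le_mul_right (ENNReal.le_tsum x) _).trans (hC.pow_mul_sqNorm_convPow_le hprob hsymm n)
  have hterm' : (1 + 2 * C : ℝ) ^ n * convPow μ n x ^ 2 ≤ (2 * C) ^ n := by
    rw [← Real.coe_toNNReal _ (convPow_nonneg hprob n x)]
    exact_mod_cast hterm
  refine le_of_sq_le_sq ?_ (by positivity)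
  rw [← pow_mul, mul_comm n, pow_mul, Real.sq_sqrt (by positivity), div_pow,
    le_div_iff₀ (by positivity), mul_comm]
  exact hterm'

lemma exists_convPow_le_exp {S : Finset G} (hS : Generates S) (hprob : IsProbDensity μ)
    (hexp : HasExpMoment (wordDist S) μ) : ∃ lam : ℝ, 0 < lam ∧ ∃ M : ℝ, 0 < M ∧
      ∀ n x, convPow μ n x ≤ M ^ n * Real.exp (-(lam * wordDist S 1 x)) := by
  obtain ⟨lam, hlam, hsum⟩ := hexp
  have hone : 1 ≤ ∑' g, Real.exp (lam * wordDist S 1 g) * μ g := by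
    rw [← hprob.2.tsum_eq]
    refine hprob.2.summable.tsum_le_tsum (fun g => ?_) hsum
    refine le_mul_of_one_le_left (hprob.1 g) (Real.one_le_exp ?_)
    exact mul_nonneg hlam.le (Nat.cast_nonneg _)
  refine ⟨lam, hlam, _, one_pos.trans_le hone, fun n x => ?_⟩
  have hweight := tsum_ofReal_convPow_mul_le hprob
    (E := fun x => ENNReal.ofReal (Real.exp (lam * wordDist S 1 x)))
    (by simp [wordDist_one_left, wordLength_one]) (fun x y => ?_) n
  · simp only [← ENNReal.ofReal_mul (hprob.1 _), ← ENNReal.ofReal_mul (convPow_nonneg hprob _ _),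
      mul_comm (μ _)] at hweight
    rw [← ENNReal.ofReal_tsum_of_nonneg
      (fun g => mul_nonneg (Real.exp_nonneg _) (hprob.1 g)) hsum,
      ← ENNReal.ofReal_pow (zero_le_one.trans hone)] at hweight
    rw [Real.exp_neg, ← div_eq_mul_inv, le_div_iff₀ (Real.exp_pos _)]
    exact (ENNReal.ofReal_le_ofReal_iff (by positivity)).1 ((ENNReal.le_tsum x).trans hweight)
  · rw [← ENNReal.ofReal_mul (Real.exp_nonneg _), ← Real.exp_add, ← mul_add]
    simp only [wordDist_one_left]
    gcongr
    exact_mod_cast wordLength_mul_le hS x y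

end RandomWalk

lemma le_rpow_mul_rpow {a p q θ : ℝ} (ha : 0 ≤ a) (hp : a ≤ p) (hq : a ≤ q) (hθ₀ : 0 ≤ θ)
    (hθ₁ : θ ≤ 1) : a ≤ p ^ (1 - θ) * q ^ θ := by
  calc a = a ^ (1 - θ) * a ^ θ := by
        rw [← Real.rpow_add_of_nonneg ha (sub_nonneg.2 hθ₁) hθ₀, sub_add_cancel, Real.rpow_one]
    _ ≤ p ^ (1 - θ) * q ^ θ := by
        exact mul_le_mul (Real.rpow_le_rpow ha hp (sub_nonneg.2 hθ₁)) (Real.rpow_le_rpow ha hq hθ₀)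
          (by positivity) (Real.rpow_nonneg (ha.trans hp) _)

lemma exists_rpow_mul_rpow_lt_one {ρ M : ℝ} (hρ : ρ < 1) (hM : 0 < M) :
    ∃ θ : ℝ, 0 < θ ∧ θ < 1 ∧ ρ ^ (1 - θ) * M ^ θ < 1 := by
  have hcont : ContinuousAt (fun θ : ℝ => ρ ^ (1 - θ) * M ^ θ) 0 := by
    refine ContinuousAt.mul ?_ (Real.continuousAt_const_rpow hM.ne')
    exact ContinuousAt.comp (Real.continuousAt_const_rpow' (by norm_num)) (by fun_prop)
  have hlt : ∀ᶠ θ in 𝓝 (0 : ℝ), ρ ^ (1 - θ) * M ^ θ < 1 :=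
    hcont.eventually_lt continuousAt_const (by simpa using hρ)
  obtain ⟨θ, hθ, hθ₀, hθ₁⟩ :=
    ((hlt.filter_mono nhdsWithin_le_nhds).and (Ioo_mem_nhdsGT (zero_lt_one (α := ℝ)))).exists
  exact ⟨θ, hθ₀, hθ₁, hθ⟩

lemma exists_tsum_le_exp {X : Type*} {a : ℕ → X → ℝ} {ℓ : X → ℝ} {ρ M lam : ℝ}
    (ha : ∀ n x, 0 ≤ a n x) (hρ₀ : 0 ≤ ρ) (hρ₁ : ρ < 1) (hM : 0 < M) (hlam : 0 < lam)
    (haρ : ∀ n x, a n x ≤ ρ ^ n) (haM : ∀ n x, a n x ≤ M ^ n * Real.exp (-(lam * ℓ x))) :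
    ∃ C c : ℝ, 0 < C ∧ 0 < c ∧ ∀ x, ∑' n, a n x ≤ C * Real.exp (-c * ℓ x) := by
  obtain ⟨θ, hθ₀, hθ₁, hθ⟩ := exists_rpow_mul_rpow_lt_one hρ₁ hM
  set q := ρ ^ (1 - θ) * M ^ θ
  have hq : 0 ≤ q := by positivity
  have hle : ∀ n x, a n x ≤ q ^ n * Real.exp (-(lam * θ) * ℓ x) := by
    intro n x
    refine (le_rpow_mul_rpow (ha n x) (haρ n x) (haM n x) hθ₀.le hθ₁.le).trans_eq ?_
    rw [Real.mul_rpow (by positivity) (Real.exp_nonneg _), ← Real.exp_mul, mul_pow,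
      Real.rpow_pow_comm hρ₀, Real.rpow_pow_comm hM.le]
    ring_nf
  refine ⟨(1 - q)⁻¹, lam * θ, inv_pos.2 (sub_pos.2 hθ), mul_pos hlam hθ₀, fun x => ?_⟩
  have hgeom := (hasSum_geometric_of_lt_one hq hθ).mul_right (Real.exp (-(lam * θ) * ℓ x))
  rw [← hgeom.tsum_eq]
  exact (hgeom.summable.of_nonneg_of_le (ha · x) (hle · x)).tsum_le_tsum (hle · x) hgeom.summable

/-- **Lemma 3.6.**  On a non-elementary hyperbolic group, a symmetric probability measure
(whose support generates the group) with a finite exponential moment satisfies the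
exponential decay estimate (ED): `G(e,γ) ≤ C₁ exp(-c₁ d_w(e,γ))`. -/
theorem green_function_exponential_decay
    {G : Type*} [Group G] (hG : NonElemHyperbolic G)
    (S : Finset G) (hS : Generates S)
    (μ : G → ℝ) (hprob : IsProbDensity μ) (hsymm : IsSymmetric μ) (hgen : GeneratesSupp μ)
    (hexp : HasExpMoment (wordDist S) μ) :
    ∃ C₁ c₁ : ℝ, 0 < C₁ ∧ 0 < c₁ ∧
      ∀ γ : G, greenFn μ 1 γ ≤ C₁ * Real.exp (-c₁ * wordDist S 1 γ) := by
  have : Infinite G := hG.1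
  obtain ⟨hhyp, hqi⟩ := hG.2.2 S hS
  obtain ⟨K, hdrift⟩ := exists_hasDrift hS hhyp hqi
  have hsupp : Subgroup.closure {g | (μ g).toNNReal ≠ 0} = ⊤ := by
    simpa only [GeneratesSupp, ne_eq, Real.toNNReal_eq_zero, (hprob.1 _).ge_iff_eq'] using hgen
  obtain ⟨C, hC⟩ := exists_poincareInequality ⟨1, one_mem_wordBall hS K⟩
    (fun _ hu => inv_mem_wordBall hu) hdrift
    (fun x u hu => (abs_wordLength_mul_sub_le hS x u).trans (Nat.cast_le.2 (mem_wordBall.1 hu)))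
    hsupp
  obtain ⟨ρ, hρ₀, hρ₁, hpow⟩ := hC.exists_convPow_le_pow hprob hsymm
  obtain ⟨lam, hlam, M, hM, hmoment⟩ := exists_convPow_le_exp hS hprob hexp
  simpa only [greenFn, inv_one, one_mul] using
    exists_tsum_le_exp (convPow_nonneg hprob) hρ₀ hρ₁ hM hlam hpow hmoment

end GHM
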